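/- arXiv:q-alg/9412003 — 2 statements merged into one kernel-verified Lean document; each statement's English description precedes it below -/
import Mathlib

section
/- In a braided quantum group, the antipode twisting relations hold: σ(κ⊗id) = (id⊗κ)τσ⁻¹τ, σ(id⊗κ) = (κ⊗id)τσ⁻¹τ, τ(id⊗κ) = (κ⊗id)τ, and τ(κ⊗id) = (id⊗κ)τ, where τ is the secondary braiding. Consequently, (κ⊗κ)τ = τ(κ⊗κ) and (κ⊗κ)σ = σ(κ⊗κ). -/
open TensorProduct LinearMap

noncomputable section

variable (A : Type*) [Ring A] [Algebra ℂ A]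

/-- Two-fold tensor product of `A` with itself. -/
abbrev T2 := A ⊗[ℂ] A
/-- Three-fold tensor product (right associated). -/
abbrev T3 := A ⊗[ℂ] (A ⊗[ℂ] A)
/-- Four-fold tensor product (right associated). -/
abbrev T4 := A ⊗[ℂ] (A ⊗[ℂ] (A ⊗[ℂ] A))

variable {A}

/-- The multiplication of `A` as a linear map. -/
def mA : T2 A →ₗ[ℂ] A := LinearMap.mul' ℂ A

/-- `f ⊗ id` : a map of `T2` acting on the factors 1,2 of `T3`. -/
def op12 (f : T2 A →ₗ[ℂ] T2 A) : T3 A →ₗ[ℂ] T3 A :=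
  (TensorProduct.assoc ℂ A A A).toLinearMap ∘ₗ f.rTensor A ∘ₗ
    (TensorProduct.assoc ℂ A A A).symm.toLinearMap

/-- `id ⊗ f` : a map of `T2` acting on the factors 2,3 of `T3`. -/
def op23 (f : T2 A →ₗ[ℂ] T2 A) : T3 A →ₗ[ℂ] T3 A := f.lTensor A

/-- `f ⊗ id ⊗ id` : a map of `T2` acting on the factors 1,2 of `T4`. -/
def op12_4 (f : T2 A →ₗ[ℂ] T2 A) : T4 A →ₗ[ℂ] T4 A :=
  (TensorProduct.assoc ℂ A A (T2 A)).toLinearMap ∘ₗ f.rTensor (T2 A) ∘ₗ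
    (TensorProduct.assoc ℂ A A (T2 A)).symm.toLinearMap

/-- `id ⊗ f ⊗ id` : a map of `T2` acting on the factors 2,3 of `T4`. -/
def op23_4 (f : T2 A →ₗ[ℂ] T2 A) : T4 A →ₗ[ℂ] T4 A := (op12 f).lTensor A

/-- `id ⊗ id ⊗ f` : a map of `T2` acting on the factors 3,4 of `T4`. -/
def op34_4 (f : T2 A →ₗ[ℂ] T2 A) : T4 A →ₗ[ℂ] T4 A := (f.lTensor A).lTensor A

/-- `m ⊗ id : T3 → T2`. -/
def m12 : T3 A →ₗ[ℂ] T2 A :=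
  (mA (A := A)).rTensor A ∘ₗ (TensorProduct.assoc ℂ A A A).symm.toLinearMap

/-- `id ⊗ m : T3 → T2`. -/
def m23 : T3 A →ₗ[ℂ] T2 A := (mA (A := A)).lTensor A

/-- `m ⊗ m : T4 → T2`. -/
def mm : T4 A →ₗ[ℂ] T2 A := m12 ∘ₗ ((mA (A := A)).lTensor A).lTensor A

/-- A braided quantum group structure on the algebra `A` (Đurđević).
`φ` is the coproduct, `ε` the counit, `κ` the antipode, `σ` the braiding
(with given inverse `σ'`). -/
structure BQG (A : Type*) [Ring A] [Algebra ℂ A] where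
  φ : A →ₗ[ℂ] T2 A
  ε : A →ₗ[ℂ] ℂ
  κ : A →ₗ[ℂ] A
  σ : T2 A →ₗ[ℂ] T2 A
  σ' : T2 A →ₗ[ℂ] T2 A
  σ_comp : σ ∘ₗ σ' = LinearMap.id
  comp_σ : σ' ∘ₗ σ = LinearMap.id
  κ_bij : Function.Bijective κ
  /-- coassociativity `(φ⊗id)φ = (id⊗φ)φ` -/
  coassoc : (TensorProduct.assoc ℂ A A A).toLinearMap ∘ₗ φ.rTensor A ∘ₗ φ = φ.lTensor A ∘ₗ φ
  /-- `(ε⊗id)φ = id` -/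
  counit_left : (TensorProduct.lid ℂ A).toLinearMap ∘ₗ ε.rTensor A ∘ₗ φ = LinearMap.id
  /-- `(id⊗ε)φ = id` -/
  counit_right : (TensorProduct.rid ℂ A).toLinearMap ∘ₗ ε.lTensor A ∘ₗ φ = LinearMap.id
  /-- `σ(m⊗id) = (id⊗m)(σ⊗id)(id⊗σ)` -/
  braid_mul_left : σ ∘ₗ m12 = m23 ∘ₗ op12 σ ∘ₗ op23 σ
  /-- `σ(id⊗m) = (m⊗id)(id⊗σ)(σ⊗id)` -/
  braid_mul_right : σ ∘ₗ m23 = m12 ∘ₗ op23 σ ∘ₗ op12 σ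
  /-- `φm = (m⊗m)(id⊗σ⊗id)(φ⊗φ)` -/
  comul_mul : φ ∘ₗ mA = mm ∘ₗ op23_4 σ ∘ₗ
      (TensorProduct.assoc ℂ A A (T2 A)).toLinearMap ∘ₗ φ.rTensor (T2 A) ∘ₗ φ.lTensor A
  /-- `(σ⊗id²)(id⊗φ⊗id)(σ⁻¹⊗id)(id⊗φ) = (id²⊗σ)(id⊗φ⊗id)(id⊗σ⁻¹)(φ⊗id)` -/
  mixed_coassoc :
    op12_4 σ ∘ₗ ((TensorProduct.assoc ℂ A A A).toLinearMap ∘ₗ φ.rTensor A).lTensor A ∘ₗ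
        op12 σ' ∘ₗ φ.lTensor A
      = op34_4 σ ∘ₗ ((TensorProduct.assoc ℂ A A A).toLinearMap ∘ₗ φ.rTensor A).lTensor A ∘ₗ
        op23 σ' ∘ₗ (TensorProduct.assoc ℂ A A A).toLinearMap ∘ₗ φ.rTensor A
  /-- `m(κ⊗id)φ = 1ε` -/
  antipode_left : mA ∘ₗ κ.rTensor A ∘ₗ φ = Algebra.linearMap ℂ A ∘ₗ ε
  /-- `m(id⊗κ)φ = 1ε` -/
  antipode_right : mA ∘ₗ κ.lTensor A ∘ₗ φ = Algebra.linearMap ℂ A ∘ₗ ε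

namespace BQG

variable {A : Type*} [Ring A] [Algebra ℂ A] (G : BQG A)

/-- `φ ⊗ id : T2 → T3`. -/
def φ1 : T2 A →ₗ[ℂ] T3 A := (TensorProduct.assoc ℂ A A A).toLinearMap ∘ₗ G.φ.rTensor A

/-- `id ⊗ φ : T2 → T3`. -/
def φ2 : T2 A →ₗ[ℂ] T3 A := G.φ.lTensor A

/-- `id² ⊗ ε : T3 → T2`. -/
def ε3r : T3 A →ₗ[ℂ] T2 A :=
  ((TensorProduct.rid ℂ A).toLinearMap ∘ₗ G.ε.lTensor A).lTensor A

/-- `ε ⊗ id² : T3 → T2`. -/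
def ε3l : T3 A →ₗ[ℂ] T2 A :=
  (TensorProduct.lid ℂ (T2 A)).toLinearMap ∘ₗ G.ε.rTensor (T2 A)

/-- The secondary braiding `τ = (id²⊗ε)(id⊗σ⁻¹)(φ⊗id)σ`. -/
def τ : T2 A →ₗ[ℂ] T2 A := G.ε3r ∘ₗ op23 G.σ' ∘ₗ G.φ1 ∘ₗ G.σ

/-- `ε ⊗ ε : T2 → ℂ`. -/
def εε : T2 A →ₗ[ℂ] ℂ :=
  (TensorProduct.lid ℂ ℂ).toLinearMap ∘ₗ G.ε.rTensor ℂ ∘ₗ G.ε.lTensor A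

end BQG


namespace BQGAux

variable {A : Type*} [Ring A] [Algebra ℂ A]
variable {M : Type*} [AddCommGroup M] [Module ℂ M]
variable {N : Type*} [AddCommGroup N] [Module ℂ N]
variable {Q : Type*} [AddCommGroup Q] [Module ℂ Q]

/-- Left whiskering by `A`. -/
def L (f : M →ₗ[ℂ] N) : A ⊗[ℂ] M →ₗ[ℂ] A ⊗[ℂ] N := f.lTensor A

/-- A two-leg operator acting on the first two legs, with arbitrary tail. -/
def S (f : T2 A →ₗ[ℂ] T2 A) : A ⊗[ℂ] (A ⊗[ℂ] M) →ₗ[ℂ] A ⊗[ℂ] (A ⊗[ℂ] M) :=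
  (TensorProduct.assoc ℂ A A M).toLinearMap ∘ₗ f.rTensor M ∘ₗ
    (TensorProduct.assoc ℂ A A M).symm.toLinearMap

/-- Coproduct on the first leg. -/
def D (G : BQG A) : A ⊗[ℂ] M →ₗ[ℂ] A ⊗[ℂ] (A ⊗[ℂ] M) :=
  (TensorProduct.assoc ℂ A A M).toLinearMap ∘ₗ G.φ.rTensor M

/-- Counit on the first leg. -/
def E (G : BQG A) : A ⊗[ℂ] M →ₗ[ℂ] M :=
  (TensorProduct.lid ℂ M).toLinearMap ∘ₗ G.ε.rTensor M

/-- Antipode on the first leg. -/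
def Ka (G : BQG A) : A ⊗[ℂ] M →ₗ[ℂ] A ⊗[ℂ] M := G.κ.rTensor M

/-- Product of the first two legs. -/
def Mu : A ⊗[ℂ] (A ⊗[ℂ] M) →ₗ[ℂ] A ⊗[ℂ] M :=
  (mA (A := A)).rTensor M ∘ₗ (TensorProduct.assoc ℂ A A M).symm.toLinearMap

/-- Insertion of a unit as first leg. -/
def U : M →ₗ[ℂ] A ⊗[ℂ] M := TensorProduct.mk ℂ A M 1

/-- Appending a tail. -/
def J (m : M) : A →ₗ[ℂ] A ⊗[ℂ] M := (TensorProduct.mk ℂ A M).flip m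

@[simp] theorem L_tmul (f : M →ₗ[ℂ] N) (a : A) (m : M) : L f (a ⊗ₜ[ℂ] m) = a ⊗ₜ f m := rfl
@[simp] theorem J_apply (a : A) (m : M) : J m a = a ⊗ₜ[ℂ] m := rfl
@[simp] theorem U_apply (m : M) : U (A := A) m = (1 : A) ⊗ₜ[ℂ] m := rfl
@[simp] theorem Mu_tmul (a b : A) (m : M) : Mu (a ⊗ₜ[ℂ] (b ⊗ₜ[ℂ] m)) = (a * b) ⊗ₜ m := by
  simp [Mu, mA]
@[simp] theorem E_tmul (G : BQG A) (a : A) (m : M) : E G (a ⊗ₜ[ℂ] m) = G.ε a • m := by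
  simp [E]
@[simp] theorem Ka_tmul (G : BQG A) (a : A) (m : M) : Ka G (a ⊗ₜ[ℂ] m) = G.κ a ⊗ₜ m := by
  simp [Ka]

theorem Lc (f : N →ₗ[ℂ] Q) (g : M →ₗ[ℂ] N) (x : A ⊗[ℂ] M) : L (f ∘ₗ g) x = L f (L g x) := by
  simp [L, LinearMap.lTensor_comp]

theorem Lid (x : A ⊗[ℂ] M) : L LinearMap.id x = x := by simp [L]

theorem lft {f g : M →ₗ[ℂ] N} (h : ∀ x, f x = g x) (x : A ⊗[ℂ] M) : L f x = L g x := by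
  rw [LinearMap.ext h]

theorem lft1 {f : M →ₗ[ℂ] M} (h : ∀ x, f x = x) (x : A ⊗[ℂ] M) : L f x = x := by
  rw [show f = LinearMap.id from LinearMap.ext h, Lid]

/-- extensionality -/
theorem ext2 {f g : A ⊗[ℂ] (A ⊗[ℂ] M) →ₗ[ℂ] N}
    (h : ∀ (m : M) (t : T2 A), f (L (J m) t) = g (L (J m) t)) (x) : f x = g x := by
  have : f = g := by
    ext a b m
    exact h m (a ⊗ₜ b)
  rw [this]

theorem ext3 {f g : A ⊗[ℂ] (A ⊗[ℂ] (A ⊗[ℂ] M)) →ₗ[ℂ] N}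
    (h : ∀ (m : M) (t : T3 A), f (L (L (J m)) t) = g (L (L (J m)) t)) (x) : f x = g x := by
  have : f = g := by
    ext a b c m
    exact h m (a ⊗ₜ (b ⊗ₜ c))
  rw [this]

theorem ext1 {f g : A ⊗[ℂ] M →ₗ[ℂ] N}
    (h : ∀ (m : M) (t : A), f (J m t) = g (J m t)) (x) : f x = g x := by
  have : f = g := by
    ext a m
    exact h m a
  rw [this]

-- naturality
theorem nS (f : T2 A →ₗ[ℂ] T2 A) (h : M →ₗ[ℂ] N) (x) :
    S f (L (L h) x) = L (L h) (S f x) := by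
  have key : ∀ (t : T2 A) (m : M), (TensorProduct.assoc ℂ A A N) (t ⊗ₜ h m)
      = L (L h) ((TensorProduct.assoc ℂ A A M) (t ⊗ₜ m)) := by
    intro t m
    induction t using TensorProduct.induction_on with
    | zero => simp
    | tmul a b => simp
    | add a b ha hb => simp only [TensorProduct.add_tmul, map_add, ha, hb]
  have : S f ∘ₗ L (L h) = L (L h) ∘ₗ S f := by
    ext a b m
    simp [S, key]
  exact LinearMap.congr_fun this x

theorem nD (G : BQG A) (h : M →ₗ[ℂ] N) (x) : D G (L h x) = L (L h) (D G x) := by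
  have key : ∀ (t : T2 A) (m : M), (TensorProduct.assoc ℂ A A N) (t ⊗ₜ h m)
      = L (L h) ((TensorProduct.assoc ℂ A A M) (t ⊗ₜ m)) := by
    intro t m
    induction t using TensorProduct.induction_on with
    | zero => simp
    | tmul a b => simp
    | add a b ha hb => simp only [TensorProduct.add_tmul, map_add, ha, hb]
  have : D G ∘ₗ L h = L (L h) ∘ₗ D G := by
    ext a m
    simp [D, key]
  exact LinearMap.congr_fun this x

theorem nE (G : BQG A) (h : M →ₗ[ℂ] N) (x) : E G (L h x) = h (E G x) := by
  have : E G ∘ₗ L h = h ∘ₗ E G := by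
    ext a m
    simp
  exact LinearMap.congr_fun this x

theorem nKa (G : BQG A) (h : M →ₗ[ℂ] N) (x) : Ka G (L h x) = L h (Ka G x) := by
  have : Ka G ∘ₗ L h = L h ∘ₗ Ka G := by
    ext a m
    simp
  exact LinearMap.congr_fun this x

theorem nMu (h : M →ₗ[ℂ] N) (x : A ⊗[ℂ] (A ⊗[ℂ] M)) : Mu (L (L h) x) = L h (Mu x) := by
  have : Mu (A := A) ∘ₗ L (L h) = L h ∘ₗ Mu := by
    ext a b m
    simp
  exact LinearMap.congr_fun this x

theorem nU (h : M →ₗ[ℂ] N) (x : M) : U (A := A) (h x) = L h (U x) := by simp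

-- appended tails
theorem jS (f : T2 A →ₗ[ℂ] T2 A) (m : M) (t : T2 A) : S f (L (J m) t) = L (J m) (f t) := by
  have key : ∀ (t : T2 A), (TensorProduct.assoc ℂ A A M) (t ⊗ₜ m) = L (J m) t := by
    intro t
    induction t using TensorProduct.induction_on with
    | zero => simp
    | tmul a b => simp
    | add a b ha hb => simp only [TensorProduct.add_tmul, map_add, ha, hb]
  rw [← key, ← key]
  simp [S]

theorem jD (G : BQG A) (m : M) (t : A) : D G (J m t) = L (J m) (G.φ t) := by
  have key : ∀ (t : T2 A), (TensorProduct.assoc ℂ A A M) (t ⊗ₜ m) = L (J m) t := by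
    intro t
    induction t using TensorProduct.induction_on with
    | zero => simp
    | tmul a b => simp
    | add a b ha hb => simp only [TensorProduct.add_tmul, map_add, ha, hb]
  rw [← key]
  simp [D]

theorem jMu (m : M) (t : T2 A) : Mu (L (J m) t) = J m (mA t) := by
  have : Mu ∘ₗ L (J m) = J m ∘ₗ mA (A := A) := by
    ext a b
    simp [mA]
  exact LinearMap.congr_fun this t

-- identification of the frozen operators
theorem op12_eq (f : T2 A →ₗ[ℂ] T2 A) : op12 f = S f := rfl
theorem op12_4_eq (f : T2 A →ₗ[ℂ] T2 A) : op12_4 f = S f := rfl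
theorem op23_eq (f : T2 A →ₗ[ℂ] T2 A) : op23 f = L f := rfl
theorem op34_4_eq (f : T2 A →ₗ[ℂ] T2 A) : op34_4 f = L (L f) := rfl
theorem op23_4_eq (f : T2 A →ₗ[ℂ] T2 A) : op23_4 f = L (S f) := rfl
theorem m12_eq : m12 (A := A) = Mu := rfl
theorem m23_eq : m23 (A := A) = L mA := rfl

-- lifted tail lemmas
theorem jSL (f : T2 A →ₗ[ℂ] T2 A) (m : M) (t : T3 A) :
    L (S f) (L (L (J m)) t) = L (L (J m)) (L f t) := by
  simp only [← Lc]; exact lft (fun y => jS f m y) t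
theorem jSLL (f : T2 A →ₗ[ℂ] T2 A) (m : M) (t : T4 A) :
    L (L (S f)) (L (L (L (J m))) t) = L (L (L (J m))) (L (L f) t) := by
  simp only [← Lc]; exact lft (fun y => jSL f m y) t
theorem jDL (G : BQG A) (m : M) (t : T2 A) :
    L (D G) (L (J m) t) = L (L (J m)) (L G.φ t) := by
  simp only [← Lc]; exact lft (fun y => jD G m y) t
theorem jDLL (G : BQG A) (m : M) (t : T3 A) :
    L (L (D G)) (L (L (J m)) t) = L (L (L (J m))) (L (L G.φ) t) := by
  simp only [← Lc]; exact lft (fun y => jDL G m y) t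
theorem jMuL (m : M) (t : T3 A) : L Mu (L (L (J m)) t) = L (J m) (L mA t) := by
  simp only [← Lc]; exact lft (fun y => jMu m y) t
theorem jMuLL (m : M) (t : T4 A) : L (L Mu) (L (L (L (J m))) t) = L (L (J m)) (L (L mA) t) := by
  simp only [← Lc]; exact lft (fun y => jMuL m y) t

variable (G : BQG A)

-- axioms with tail
theorem ss' (x : A ⊗[ℂ] (A ⊗[ℂ] M)) : S G.σ (S G.σ' x) = x := by
  refine ext2 (f := S G.σ ∘ₗ S G.σ') (g := LinearMap.id) (fun m t => ?_) x
  simp only [LinearMap.comp_apply, jS, LinearMap.id_apply]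
  rw [show G.σ (G.σ' t) = t from LinearMap.congr_fun G.σ_comp t]
theorem s's (x : A ⊗[ℂ] (A ⊗[ℂ] M)) : S G.σ' (S G.σ x) = x := by
  refine ext2 (f := S G.σ' ∘ₗ S G.σ) (g := LinearMap.id) (fun m t => ?_) x
  simp only [LinearMap.comp_apply, jS, LinearMap.id_apply]
  rw [show G.σ' (G.σ t) = t from LinearMap.congr_fun G.comp_σ t]

theorem DD (x : A ⊗[ℂ] M) : D G (D G x) = L (D G) (D G x) := by
  refine ext1 (f := D G ∘ₗ D G) (g := L (D G) ∘ₗ D G) (fun m t => ?_) x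
  simp only [LinearMap.comp_apply, jD, nD, jDL]
  exact congrArg _ (LinearMap.congr_fun G.coassoc t)

theorem ED (x : A ⊗[ℂ] M) : E G (D G x) = x := by
  refine ext1 (f := E G ∘ₗ D G) (g := LinearMap.id) (fun m t => ?_) x
  simp only [LinearMap.comp_apply, jD, nE, LinearMap.id_apply]
  exact congrArg _ (LinearMap.congr_fun G.counit_left t)

theorem LED (x : A ⊗[ℂ] M) : L (E G) (D G x) = x := by
  refine ext1 (f := L (E G) ∘ₗ D G) (g := LinearMap.id) (fun m t => ?_) x
  simp only [LinearMap.comp_apply, jD, LinearMap.id_apply]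
  have h : ∀ u : T2 A, L (E G) (L (J m) u) =
      J m ((TensorProduct.rid ℂ A) (G.ε.lTensor A u)) := by
    intro u
    induction u using TensorProduct.induction_on with
    | zero => simp
    | tmul a b => simp [TensorProduct.smul_tmul]
    | add a b ha hb => simp only [map_add, ha, hb]
  rw [h]
  exact congrArg _ (LinearMap.congr_fun G.counit_right t)

theorem bml (x : A ⊗[ℂ] (A ⊗[ℂ] (A ⊗[ℂ] M))) :
    S G.σ (Mu x) = L Mu (S G.σ (L (S G.σ) x)) := by
  refine ext3 (f := S G.σ ∘ₗ Mu) (g := L Mu ∘ₗ S G.σ ∘ₗ L (S G.σ)) (fun m t => ?_) x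
  simp only [LinearMap.comp_apply, jSL, nMu, jS, nS, jMuL]
  exact congrArg _ (LinearMap.congr_fun G.braid_mul_left t)

theorem bmr (x : A ⊗[ℂ] (A ⊗[ℂ] (A ⊗[ℂ] M))) :
    S G.σ (L Mu x) = Mu (L (S G.σ) (S G.σ x)) := by
  refine ext3 (f := S G.σ ∘ₗ L Mu) (g := Mu ∘ₗ L (S G.σ) ∘ₗ S G.σ) (fun m t => ?_) x
  simp only [LinearMap.comp_apply, jSL, nMu, jS, nS, jMuL]
  exact congrArg _ (LinearMap.congr_fun G.braid_mul_right t)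

theorem cm (x : A ⊗[ℂ] (A ⊗[ℂ] M)) :
    D G (Mu x) = Mu (L (L Mu) (L (S G.σ) (D G (L (D G) x)))) := by
  refine ext2 (f := D G ∘ₗ Mu)
    (g := Mu ∘ₗ L (L Mu) ∘ₗ L (S G.σ) ∘ₗ D G ∘ₗ L (D G)) (fun m t => ?_) x
  simp only [LinearMap.comp_apply, jDL, nD, jMu, jD]
  have h : ∀ u : T4 A, L (S G.σ) (L (L (L (J m))) u) = L (L (L (J m))) (L (S G.σ) u) := by
    intro u
    simp only [← Lc]; exact lft (fun y => nS G.σ (J m) y) u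
  rw [h, jMuLL, nMu, ← nD]
  exact congrArg _ (LinearMap.congr_fun G.comul_mul t)

theorem mixed (x : A ⊗[ℂ] (A ⊗[ℂ] M)) :
    S G.σ (L (D G) (S G.σ' (L (D G) x))) = L (L (S G.σ)) (L (D G) (L (S G.σ') (D G x))) := by
  refine ext2 (f := S G.σ ∘ₗ L (D G) ∘ₗ S G.σ' ∘ₗ L (D G))
    (g := L (L (S G.σ)) ∘ₗ L (D G) ∘ₗ L (S G.σ') ∘ₗ D G) (fun m t => ?_) x
  have h : ∀ u : T3 A, L (D G) (L (L (J m)) u) = L (L (L (J m))) (L (D G) u) := by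
    intro u
    simp only [← Lc]; exact lft (fun y => nD G (J m) y) u
  simp only [LinearMap.comp_apply, jDL, nD, jSL, nS, h, jSLL]
  exact congrArg _ (LinearMap.congr_fun G.mixed_coassoc t)

theorem apl (x : A ⊗[ℂ] M) : Mu (Ka G (D G x)) = U (E G x) := by
  refine ext1 (f := Mu ∘ₗ Ka G ∘ₗ D G) (g := U ∘ₗ E G) (fun m t => ?_) x
  simp only [LinearMap.comp_apply, jD, nKa, jMu]
  have := LinearMap.congr_fun G.antipode_left t
  simp only [LinearMap.comp_apply] at this
  rw [show Ka G (G.φ t) = G.κ.rTensor A (G.φ t) from rfl, this]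
  simp [Algebra.algebraMap_eq_smul_one]

theorem apr (x : A ⊗[ℂ] M) : Mu (L (Ka G) (D G x)) = U (E G x) := by
  refine ext1 (f := Mu ∘ₗ L (Ka G) ∘ₗ D G) (g := U ∘ₗ E G) (fun m t => ?_) x
  simp only [LinearMap.comp_apply, jD]
  have h : ∀ u : T2 A, L (Ka G) (L (J m) u) = L (J m) (G.κ.lTensor A u) := by
    intro u
    induction u using TensorProduct.induction_on with
    | zero => simp
    | tmul a b => simp
    | add a b ha hb => simp only [map_add, ha, hb]
  have := LinearMap.congr_fun G.antipode_right t
  simp only [LinearMap.comp_apply] at this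
  rw [h, jMu, this]
  simp [Algebra.algebraMap_eq_smul_one]

theorem mumu (x : A ⊗[ℂ] (A ⊗[ℂ] (A ⊗[ℂ] M))) : Mu (Mu x) = Mu (L Mu x) := by
  have : Mu (A := A) (M := M) ∘ₗ Mu = Mu ∘ₗ L Mu := by
    ext a b c m
    simp [mul_assoc]
  exact LinearMap.congr_fun this x

theorem muU (x : A ⊗[ℂ] M) : Mu (U x) = x := by
  have : Mu (A := A) (M := M) ∘ₗ U = LinearMap.id := by
    ext a m
    simp
  exact LinearMap.congr_fun this x

theorem muLU (x : A ⊗[ℂ] M) : Mu (L U x) = x := by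
  have : Mu (A := A) (M := M) ∘ₗ L U = LinearMap.id := by
    ext a m
    simp
  exact LinearMap.congr_fun this x


section lifts
variable {M1 M2 M3 M4 M5 M6 M7 : Type*}
  [AddCommGroup M1] [Module ℂ M1] [AddCommGroup M2] [Module ℂ M2] [AddCommGroup M3] [Module ℂ M3]
  [AddCommGroup M4] [Module ℂ M4] [AddCommGroup M5] [Module ℂ M5] [AddCommGroup M6] [Module ℂ M6]
  [AddCommGroup M7] [Module ℂ M7]

theorem lft21i {f : M2 →ₗ[ℂ] M1} {g : M1 →ₗ[ℂ] M2} (h : ∀ x, f (g x) = x) (x : A ⊗[ℂ] M1) :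
    L f (L g x) = x := by
  rw [← Lc]; exact lft1 h x
theorem lft22 {f : M2 →ₗ[ℂ] M4} {g : M1 →ₗ[ℂ] M2} {p : M3 →ₗ[ℂ] M4} {q : M1 →ₗ[ℂ] M3}
    (h : ∀ x, f (g x) = p (q x)) (x : A ⊗[ℂ] M1) :
    L f (L g x) = L p (L q x) := by
  rw [← Lc, ← Lc]; exact lft h x
theorem lft32 {f : M5 →ₗ[ℂ] M4} {f' : M2 →ₗ[ℂ] M5} {g : M1 →ₗ[ℂ] M2} {p : M3 →ₗ[ℂ] M4}
    {q : M1 →ₗ[ℂ] M3} (h : ∀ x, f (f' (g x)) = p (q x)) (x : A ⊗[ℂ] M1) :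
    L f (L f' (L g x)) = L p (L q x) := by
  rw [← Lc, ← Lc, ← Lc]; exact lft h x
theorem lft33 {f : M5 →ₗ[ℂ] M4} {f' : M2 →ₗ[ℂ] M5} {g : M1 →ₗ[ℂ] M2} {p : M6 →ₗ[ℂ] M4}
    {p' : M3 →ₗ[ℂ] M6}
    {q : M1 →ₗ[ℂ] M3} (h : ∀ x, f (f' (g x)) = p (p' (q x))) (x : A ⊗[ℂ] M1) :
    L f (L f' (L g x)) = L p (L p' (L q x)) := by
  rw [← Lc, ← Lc, ← Lc, ← Lc]; exact lft h x
theorem lft31 {f : M5 →ₗ[ℂ] M4} {f' : M2 →ₗ[ℂ] M5} {g : M1 →ₗ[ℂ] M2} {p : M1 →ₗ[ℂ] M4}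
    (h : ∀ x, f (f' (g x)) = p x) (x : A ⊗[ℂ] M1) :
    L f (L f' (L g x)) = L p x := by
  rw [← Lc, ← Lc]; exact lft h x
theorem lft41 {f : M5 →ₗ[ℂ] M4} {f' : M3 →ₗ[ℂ] M5} {f'' : M2 →ₗ[ℂ] M3} {g : M1 →ₗ[ℂ] M2}
    {p : M1 →ₗ[ℂ] M4}
    (h : ∀ x, f (f' (f'' (g x))) = p x) (x : A ⊗[ℂ] M1) :
    L f (L f' (L f'' (L g x))) = L p x := by
  rw [← Lc, ← Lc, ← Lc]; exact lft h x
end lifts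

theorem sU (x : A ⊗[ℂ] M) : S G.σ (U x) = L U x := by
  have key : ∀ z : A ⊗[ℂ] (A ⊗[ℂ] M), z = L Mu (S G.σ (U z)) := by
    intro z
    have h := bml G (U (S G.σ' z))
    rw [muU, ss', ← nU, ss'] at h
    exact h
  have h := key (L U x)
  have e1 := nU (A := A) (L (U (A := A) (M := M))) x
  rw [e1, nS, lft21i muLU] at h
  exact h.symm

theorem sLU (x : A ⊗[ℂ] M) : S G.σ (L U x) = U x := by
  have h := bmr G (L (L U) (S G.σ' (U x)))
  have e1 := nU (A := A) (L (U (A := A) (M := M))) x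
  rw [lft21i muLU, nS, ss', ← e1, ← nU, muU] at h
  exact h.symm

/-- The inverse of the secondary braiding. -/
def K : T2 A →ₗ[ℂ] T2 A := G.ε3r ∘ₗ op23 G.σ ∘ₗ G.φ1 ∘ₗ G.σ'

theorem jE (m : M) (u : T2 A) : L (E G) (L (J m) u) =
      J m (((TensorProduct.rid ℂ A).toLinearMap ∘ₗ G.ε.lTensor A) u) := by
  induction u using TensorProduct.induction_on with
  | zero => simp
  | tmul a b => simp
  | add a b ha hb => simp only [map_add, ha, hb]

theorem SK (x : A ⊗[ℂ] (A ⊗[ℂ] M)) :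
    L (L (E G)) (L (S G.σ) (D G (S G.σ' x))) = S (K G) x := by
  refine ext2 (f := L (L (E G)) ∘ₗ L (S G.σ) ∘ₗ D G ∘ₗ S G.σ') (g := S (K G)) (fun m t => ?_) x
  simp only [LinearMap.comp_apply, jS, nD, jSL]
  exact lft22 (jE G m) _

theorem Sτ (x : A ⊗[ℂ] (A ⊗[ℂ] M)) :
    L (L (E G)) (L (S G.σ') (D G (S G.σ x))) = S G.τ x := by
  refine ext2 (f := L (L (E G)) ∘ₗ L (S G.σ') ∘ₗ D G ∘ₗ S G.σ) (g := S G.τ) (fun m t => ?_) x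
  simp only [LinearMap.comp_apply, jS, nD, jSL]
  exact lft22 (jE G m) _

theorem R1 (x : A ⊗[ℂ] (A ⊗[ℂ] M)) :
    L (S (K G)) (D G x) = S G.σ (L (D G) (S G.σ' x)) := by
  have h := congrArg (L (L (L (E G)))) (mixed G x)
  rw [← nS, ← lft22 (nD _ _), ← nS, lft21i (LED G), lft41 (SK G)] at h
  exact h.symm

theorem R1' (x : A ⊗[ℂ] (A ⊗[ℂ] M)) :
    S G.σ (L (D G) x) = L (S (K G)) (D G (S G.σ x)) := by
  rw [R1, s's]

theorem R2 (x : A ⊗[ℂ] (A ⊗[ℂ] M)) :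
    S (K G) (L (D G) x) = L (S G.σ) (D G (S G.σ' x)) := by
  have h := congrArg (E G) (mixed G x)
  rw [nE, nE, nE, ED, ← R1, nE, ED] at h
  exact h

theorem R2' (x : A ⊗[ℂ] (A ⊗[ℂ] M)) :
    L (S G.σ) (D G x) = S (K G) (L (D G) (S G.σ x)) := by
  rw [R2, s's]

theorem P1 (x : A ⊗[ℂ] (A ⊗[ℂ] M)) :
    L (D G) (S (K G) x) = S (K G) (L (S (K G)) (D G x)) := by
  have h : E G (L (L (D G)) (L (S (K G)) (D G x))) = S (K G) (L (S (K G)) (D G x)) := by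
    rw [R1 G x, ← nS, ← lft22 (DD G), R1' G (L (D G) _), nE, ED]
  rw [nE, nE, ED] at h
  exact h

theorem P2 (x : A ⊗[ℂ] (A ⊗[ℂ] M)) :
    D G (S (K G) x) = L (S (K G)) (S (K G) (L (D G) x)) := by
  have h1 : L (L (L (E G))) (D G (S (K G) (L (D G) x))) = D G (S (K G) x) := by
    rw [← nD, ← nS, lft21i (LED G)]
  rw [← h1, R2, nD, DD, lft22 (f := L (S G.σ)) (g := D G) (p := S (K G)) (q := L (D G) ∘ₗ S G.σ)
    (fun x => R2' G x), Lc, ← lft22 (nS _ _), lft21i (lft21i (LED G))]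

theorem gg' (x : A ⊗[ℂ] (A ⊗[ℂ] M)) :
    Mu (L (D G) (Mu (L (Ka G) (L (D G) x)))) = x := by
  rw [← nMu, ← lft22 (nKa _ _), ← lft22 (DD G), mumu, lft32 (apl G), lft21i (ED G), muLU]

theorem g'g (x : A ⊗[ℂ] (A ⊗[ℂ] M)) :
    Mu (L (Ka G) (L (D G) (Mu (L (D G) x)))) = x := by
  rw [← nMu, ← nMu, ← lft22 (DD G), mumu, lft32 (apr G), lft21i (ED G), muLU]

theorem Kid (x : A ⊗[ℂ] (A ⊗[ℂ] (A ⊗[ℂ] M))) :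
    L (S (K G)) (Mu (L (D G) (L (S G.σ) x))) = S G.σ (L Mu (L (L (D G)) (S G.σ' x))) := by
  have h : L (S G.σ) (L (L (D G)) x) = L (L (S (K G))) (L (D G) (L (S G.σ) x)) := by
    rw [← Lc, ← Lc, ← Lc]
    exact lft (fun y => R1' G y) x
  rw [← nMu, ← h, ← nS, bmr, ss']

/-- Explicit inverse of `id ⊗ K`. -/
def inv (w : A ⊗[ℂ] (A ⊗[ℂ] (A ⊗[ℂ] M))) : A ⊗[ℂ] (A ⊗[ℂ] (A ⊗[ℂ] M)) :=
  Mu (L (D G) (L (S G.σ) (S G.σ (L Mu (L (L (Ka G)) (L (L (D G)) (S G.σ' w)))))))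

theorem Kinv (w : A ⊗[ℂ] (A ⊗[ℂ] (A ⊗[ℂ] M))) : L (S (K G)) (inv G w) = w := by
  have h : ∀ z : A ⊗[ℂ] (A ⊗[ℂ] (A ⊗[ℂ] M)),
      L Mu (L (L (D G)) (L Mu (L (L (Ka G)) (L (L (D G)) z)))) = z := by
    intro z
    simp only [← Lc]
    exact lft1 (fun y => gg' G y) z
  rw [inv, Kid, s's, h, ss']

theorem invK (w : A ⊗[ℂ] (A ⊗[ℂ] (A ⊗[ℂ] M))) : inv G (L (S (K G)) w) = w := by
  have h : ∀ z : A ⊗[ℂ] (A ⊗[ℂ] (A ⊗[ℂ] M)),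
      L Mu (L (L (Ka G)) (L (L (D G)) (L Mu (L (L (D G)) z)))) = z := by
    intro z
    simp only [← Lc]
    exact lft1 (fun y => g'g G y) z
  obtain ⟨u, rfl⟩ : ∃ u, Mu (L (D G) (L (S G.σ) u)) = w :=
    ⟨L (S G.σ') (Mu (L (Ka G) (L (D G) w))), by rw [lft21i (ss' G), gg']⟩
  rw [Kid, inv, s's, h, ss']


/-- A two-sided inverse of `K`. -/
structure Inv (G : BQG A) where
  /-- the inverse -/
  T : T2 A →ₗ[ℂ] T2 A
  KT : ∀ x, K G (T x) = x
  TK : ∀ x, T (K G x) = x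

theorem kt (I : Inv G) (x : A ⊗[ℂ] (A ⊗[ℂ] M)) : S (K G) (S I.T x) = x := by
  refine ext2 (f := S (K G) ∘ₗ S I.T) (g := LinearMap.id) (fun m t => ?_) x
  simp only [LinearMap.comp_apply, jS, LinearMap.id_apply, I.KT]
theorem tk (I : Inv G) (x : A ⊗[ℂ] (A ⊗[ℂ] M)) : S I.T (S (K G) x) = x := by
  refine ext2 (f := S I.T ∘ₗ S (K G)) (g := LinearMap.id) (fun m t => ?_) x
  simp only [LinearMap.comp_apply, jS, LinearMap.id_apply, I.TK]

theorem R1T (I : Inv G) (x : A ⊗[ℂ] (A ⊗[ℂ] M)) :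
    D G (S G.σ x) = L (S I.T) (S G.σ (L (D G) x)) := by
  rw [R1', lft21i (tk G I)]
theorem R2T (I : Inv G) (x : A ⊗[ℂ] (A ⊗[ℂ] M)) :
    L (D G) (S G.σ x) = S I.T (L (S G.σ) (D G x)) := by
  rw [R2', tk]
theorem P1T (I : Inv G) (x : A ⊗[ℂ] (A ⊗[ℂ] M)) :
    D G (S I.T x) = L (S I.T) (S I.T (L (D G) x)) := by
  have h := P1 G (S I.T x)
  rw [kt] at h
  rw [h, tk, lft21i (tk G I)]
theorem P2T (I : Inv G) (x : A ⊗[ℂ] (A ⊗[ℂ] M)) :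
    L (D G) (S I.T x) = S I.T (L (S I.T) (D G x)) := by
  have h := P2 G (S I.T x)
  rw [kt] at h
  rw [h, lft21i (tk G I), tk]

theorem strip1 (W F : A ⊗[ℂ] M →ₗ[ℂ] A ⊗[ℂ] N) (h : ∀ x, Mu (L W (D G x)) = F x)
    (x : A ⊗[ℂ] M) : W x = Mu (Ka G (L F (D G x))) := by
  have h1 : L F (D G x) = L Mu (L (L W) (L (D G) (D G x))) := by
    rw [lft31 h]
  rw [h1, ← DD, nKa, nKa, ← mumu, nMu, apl, ED, ← nU, muU]

theorem Q1 (x : A ⊗[ℂ] (A ⊗[ℂ] M)) :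
    L (E G) (L Mu (S G.σ (L (D G) x))) = E G x := by
  have h : ∀ x : A ⊗[ℂ] (A ⊗[ℂ] M),
      Mu (L (L (E G) ∘ₗ L Mu ∘ₗ S G.σ ∘ₗ L (D G)) (D G x)) = Mu x := by
    intro x
    have h := congrArg (L (E G)) (cm G x)
    rw [LED, ← nMu, nD] at h
    simp only [Lc]
    exact h.symm
  have h2 := strip1 G _ _ h x
  rw [nKa, ← mumu, apl, muU] at h2
  exact h2

/-- auxiliary operator -/
def V : A ⊗[ℂ] (A ⊗[ℂ] M) →ₗ[ℂ] A ⊗[ℂ] M := E G ∘ₗ Mu ∘ₗ L (S G.σ) ∘ₗ D G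

theorem V_def (x : A ⊗[ℂ] (A ⊗[ℂ] M)) : V G x = E G (Mu (L (S G.σ) (D G x))) := rfl

theorem nV (h : M →ₗ[ℂ] N) (x : A ⊗[ℂ] (A ⊗[ℂ] M)) : V G (L (L h) x) = L h (V G x) := by
  rw [V_def, nD, lft22 (nS _ _), nMu, nE, V_def]

theorem muk (z : A ⊗[ℂ] (A ⊗[ℂ] M)) : Mu (L (Ka G) (Mu (L (D G) z))) = L (E G) z := by
  rw [← nMu, mumu, lft32 (apr G), muLU]

theorem Q2 (x : A ⊗[ℂ] (A ⊗[ℂ] M)) : V G x = L (E G) x := by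
  have h : ∀ x : A ⊗[ℂ] (A ⊗[ℂ] (A ⊗[ℂ] M)), Mu (V G (L (D G) x)) = Mu x := by
    intro x
    have h := congrArg (E G) (cm G x)
    rw [ED, nMu, nE] at h
    exact h.symm
  have h2 := congrArg (fun y => Mu (L (Ka G) y)) (h (L (D G) x))
  rw [lft22 (DD G), nV, muk, muk, ← nV, lft21i (LED G)] at h2
  exact h2

theorem EMK (x : A ⊗[ℂ] (A ⊗[ℂ] M)) :
    E G (Mu (S (K G) x)) = E G (E G (S G.σ' x)) := by
  have h : E G (Mu (S (K G) (L (D G) x))) = L (E G) (S G.σ' x) := by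
    rw [R2, ← V_def, Q2]
  have h2 := congrArg (E G) h
  rw [nE, ← nE, ← nE, ← nMu, ← nS, lft21i (LED G)] at h2
  exact h2.trans (nE G (E G) _)

theorem EM (I : Inv G) (x : A ⊗[ℂ] (A ⊗[ℂ] M)) :
    E G (E G (S G.σ' (S I.T x))) = E G (Mu x) := by
  rw [← EMK, kt]

theorem c1 (I : Inv G) (x : A ⊗[ℂ] (A ⊗[ℂ] M)) :
    D G (S G.σ' (S I.T x)) = L (S G.σ') (L (S I.T) (D G x)) := by
  have h := R2 G (S I.T x)
  rw [P2T, kt] at h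
  rw [h, lft21i (s's G)]
theorem c2 (I : Inv G) (x : A ⊗[ℂ] (A ⊗[ℂ] M)) :
    L (D G) (S G.σ' (S I.T x)) = S G.σ' (S I.T (L (D G) x)) := by
  have h := R1 G (S I.T x)
  rw [P1T, lft21i (kt G I)] at h
  rw [h, s's]

theorem psi1 (I : Inv G) (x : A ⊗[ℂ] (A ⊗[ℂ] M)) :
    L (E G) (S G.σ' (S I.T x)) = L (E G) (L Mu (D G x)) := by
  have h := congrArg (fun y => L (E G) (L (E G) y)) (c1 G I x)
  simp only [LED] at h
  rw [h]
  simp only [← Lc]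
  exact lft (fun y => EM G I y) _

theorem psi2 (I : Inv G) (x : A ⊗[ℂ] (A ⊗[ℂ] M)) :
    E G (S G.σ' (S I.T x)) = E G (Mu (L (D G) x)) := by
  have h := congrArg (fun y => E G (L (E G) y)) (c2 G I x)
  rw [← EM G I, ← nE, ← h, lft21i (ED G)]

theorem tau1 (I : Inv G) (x : A ⊗[ℂ] (A ⊗[ℂ] M)) : S G.τ x = S I.T x := by
  rw [← Sτ, R1T G I, lft33 (psi1 G I), R2T G I, ← nS, ← nS, nD, lft41 (Q1 G), LED]

theorem tau2 (I : Inv G) (x : A ⊗[ℂ] (A ⊗[ℂ] M)) :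
    E G (S G.σ' (L (D G) x)) = S I.T (S G.σ' x) := by
  obtain ⟨y, rfl⟩ : ∃ y, S G.σ y = x := ⟨_, ss' G x⟩
  have h : ∀ z : A ⊗[ℂ] (A ⊗[ℂ] (A ⊗[ℂ] M)),
      L (D G) (L (S G.σ) z) = L (L (S I.T)) (L (S G.σ) (L (L (D G)) z)) := by
    intro z
    simp only [← Lc]
    exact lft (fun y => R1T G I y) z
  rw [R2T G I, psi2, h, ← nD, nMu, nE, ← V_def, Q2, lft21i (ED G), s's]

theorem A1 (I : Inv G) (x : A ⊗[ℂ] (A ⊗[ℂ] M)) :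
    S G.σ (L (Ka G) (S (K G) x)) = Ka G (S I.T (S G.σ' x)) := by
  have h : ∀ x : A ⊗[ℂ] (A ⊗[ℂ] M), Mu (L (S G.σ ∘ₗ L (Ka G) ∘ₗ S (K G)) (D G x)) =
      (U ∘ₗ L (E G) ∘ₗ S G.σ') x := by
    intro x
    obtain ⟨y, rfl⟩ : ∃ y, S G.σ y = x := ⟨_, ss' G x⟩
    simp only [LinearMap.comp_apply, Lc]
    rw [← R1', ← nS, ← bmr, lft32 (apr G), sLU, s's]
  have h2 := strip1 G _ _ h x
  obtain ⟨y, rfl⟩ : ∃ y, S G.σ y = x := ⟨_, ss' G x⟩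
  simp only [LinearMap.comp_apply, Lc] at h2
  rw [nKa, muLU, Sτ, tau1 G I] at h2
  rw [s's]
  exact h2

theorem A2 (I : Inv G) (x : A ⊗[ℂ] (A ⊗[ℂ] M)) :
    S G.σ (Ka G (S (K G) x)) = L (Ka G) (S I.T (S G.σ' x)) := by
  have h : ∀ x : A ⊗[ℂ] (A ⊗[ℂ] (A ⊗[ℂ] M)), L Mu (S G.σ (Ka G (S (K G) (L (D G) x)))) =
      L U (E G (S G.σ' x)) := by
    intro x
    obtain ⟨y, rfl⟩ : ∃ y, S G.σ y = x := ⟨_, ss' G x⟩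
    rw [← R2', nKa, ← bml, apl, sU, s's]
  have h2 := congrArg (fun y => L Mu (L (L (Ka G)) y)) (h (L (D G) x))
  have k1 : ∀ z : A ⊗[ℂ] (A ⊗[ℂ] (A ⊗[ℂ] M)),
      L Mu (L (L (Ka G)) (L Mu (L (L (D G)) z))) = L (L (E G)) z := by
    intro z
    simp only [← Lc]
    exact lft (fun y => muk G y) z
  have k2 : ∀ z : A ⊗[ℂ] (A ⊗[ℂ] M), L Mu (L (L (Ka G)) (L U z)) = L (Ka G) z := by
    intro z
    simp only [← Lc]
    refine lft (fun y => ?_) z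
    simp only [LinearMap.comp_apply]
    rw [← nU, muU]
  rw [lft22 (DD G), nS, nKa, nS, k1, k2, ← nS, ← nKa, ← nS, lft21i (LED G), tau2 G I] at h2
  exact h2

theorem A1T (I : Inv G) (x : A ⊗[ℂ] (A ⊗[ℂ] M)) :
    S G.σ (L (Ka G) x) = Ka G (S I.T (S G.σ' (S I.T x))) := by
  rw [← A1, kt]
theorem A2T (I : Inv G) (x : A ⊗[ℂ] (A ⊗[ℂ] M)) :
    S G.σ (Ka G x) = L (Ka G) (S I.T (S G.σ' (S I.T x))) := by
  rw [← A2, kt]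

theorem surjTheta (I : Inv G) (w : A ⊗[ℂ] (A ⊗[ℂ] M)) : ∃ x, S I.T (S G.σ' (S I.T x)) = w :=
  ⟨S (K G) (S G.σ (S (K G) w)), by rw [tk, s's, tk]⟩

theorem theta1 (I : Inv G) (x : A ⊗[ℂ] (A ⊗[ℂ] M)) :
    S I.T (S G.σ' (S I.T (L (D G) x))) = L (S (K G)) (D G (S I.T (S G.σ' (S I.T x)))) := by
  rw [P1T, c2, lft21i (kt G I)]

theorem theta2 (I : Inv G) (x : A ⊗[ℂ] (A ⊗[ℂ] M)) :
    L (S I.T) (L (S G.σ') (L (S I.T) (D G x))) =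
      S (K G) (L (D G) (S I.T (S G.σ' (S I.T x)))) := by
  rw [P2T, c1, kt]

theorem kk1 (I : Inv G) (w : A ⊗[ℂ] (A ⊗[ℂ] M)) :
    Ka G (S (K G) w) = S (K G) (L (Ka G) w) := by
  obtain ⟨x, rfl⟩ := surjTheta G I w
  have h := congrArg (E G) (R1' G (Ka G x))
  rw [← nKa, A2T G I, A2T G I, theta1, nD, nE, nE, nE, nE, ED] at h
  exact h

theorem kk2 (I : Inv G) (w : A ⊗[ℂ] (A ⊗[ℂ] M)) :
    L (Ka G) (S (K G) w) = S (K G) (Ka G w) := by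
  obtain ⟨x, rfl⟩ := surjTheta G I w
  have h := congrArg (L (L (E G))) (R2' G (L (Ka G) x))
  have h3 : ∀ z : A ⊗[ℂ] (A ⊗[ℂ] (A ⊗[ℂ] M)), L (S G.σ) (L (L (Ka G)) z) =
      L (Ka G) (L (S I.T) (L (S G.σ') (L (S I.T) z))) := by
    intro z
    simp only [← Lc]
    exact lft (fun y => A1T G I y) z
  rw [nD, h3, A1T G I, theta2, ← nKa, ← lft22 (nKa _ _), ← nS, ← nS, ← nKa,
    lft21i (LED G)] at h
  exact h

theorem tt1 (I : Inv G) (x : A ⊗[ℂ] (A ⊗[ℂ] M)) :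
    S I.T (Ka G x) = L (Ka G) (S I.T x) := by
  have h := kk1 G I (S I.T x)
  rw [kt] at h
  rw [h, tk]
theorem tt2 (I : Inv G) (x : A ⊗[ℂ] (A ⊗[ℂ] M)) :
    S I.T (L (Ka G) x) = Ka G (S I.T x) := by
  have h := kk2 G I (S I.T x)
  rw [kt] at h
  rw [h, tk]

/-- embedding with trivial tail -/
def z : T2 A →ₗ[ℂ] A ⊗[ℂ] (A ⊗[ℂ] ℂ) := L (J (1 : ℂ))

theorem z_eq (t : T2 A) : L (TensorProduct.rid ℂ A).toLinearMap (z t) = t := by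
  refine lft21i (fun y => ?_) t
  simp
theorem z_eq2 (t : A ⊗[ℂ] (A ⊗[ℂ] ℂ)) : z (L (TensorProduct.rid ℂ A).toLinearMap t) = t := by
  refine lft21i (fun y => ?_) t
  have : J (1 : ℂ) ∘ₗ (TensorProduct.rid ℂ A).toLinearMap = LinearMap.id := by
    ext a
    simp
  exact LinearMap.congr_fun this y
theorem z_inj {s t : T2 A} (h : z s = z t) : s = t := by
  rw [← z_eq s, h, z_eq]

theorem Sz (f : T2 A →ₗ[ℂ] T2 A) (t : T2 A) : S f (z t) = z (f t) := jS f 1 t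
theorem Kz (t : T2 A) : Ka G (z t) = z (G.κ.rTensor A t) := nKa G _ t
theorem LKz (t : T2 A) : L (Ka G) (z t) = z (G.κ.lTensor A t) := by
  refine lft22 (fun y => ?_) t
  simp

theorem bij (x0 : A) (h0 : G.ε x0 = 1) : Function.Bijective (K G) := by
  have hE : ∀ y : A ⊗[ℂ] (A ⊗[ℂ] ℂ), E G (x0 ⊗ₜ[ℂ] y) = y := by
    intro y
    rw [E_tmul, h0, one_smul]
  constructor
  · intro s t h
    have h1 : L (S (K G)) (x0 ⊗ₜ[ℂ] z s) = L (S (K G)) (x0 ⊗ₜ[ℂ] z t) := by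
      rw [L_tmul, L_tmul, Sz, Sz, h]
    have h2 := congrArg (inv G) h1
    rw [invK, invK] at h2
    have h3 := congrArg (E G) h2
    rw [hE, hE] at h3
    exact z_inj h3
  · intro t
    refine ⟨L (TensorProduct.rid ℂ A).toLinearMap (E G (inv G (x0 ⊗ₜ[ℂ] z t))), ?_⟩
    apply z_inj
    rw [← Sz, z_eq2, ← nE, Kinv, hE]

theorem sub (h : ∀ x, G.ε x = 0) (a : A) : a = 0 := by
  have h1 := ED G (a ⊗ₜ[ℂ] (1 : ℂ))
  have h2 : E G (M := A ⊗[ℂ] ℂ) = 0 := by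
    ext x m
    simp [h]
  rw [h2] at h1
  have h3 := congrArg (TensorProduct.rid ℂ A) h1
  simpa using h3.symm

theorem exInv (x0 : A) (h0 : G.ε x0 = 1) : Nonempty (Inv G) := by
  let e := LinearEquiv.ofBijective (K G) (bij G x0 h0)
  exact ⟨⟨e.symm.toLinearMap, fun x => e.apply_symm_apply x, fun x => e.symm_apply_apply x⟩⟩

theorem main (I : Inv G) :
    G.σ ∘ₗ G.κ.rTensor A = G.κ.lTensor A ∘ₗ G.τ ∘ₗ G.σ' ∘ₗ G.τ ∧
    G.σ ∘ₗ G.κ.lTensor A = G.κ.rTensor A ∘ₗ G.τ ∘ₗ G.σ' ∘ₗ G.τ ∧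
    G.τ ∘ₗ G.κ.lTensor A = G.κ.rTensor A ∘ₗ G.τ ∧
    G.τ ∘ₗ G.κ.rTensor A = G.κ.lTensor A ∘ₗ G.τ ∧
    TensorProduct.map G.κ G.κ ∘ₗ G.τ = G.τ ∘ₗ TensorProduct.map G.κ G.κ ∧
    TensorProduct.map G.κ G.κ ∘ₗ G.σ = G.σ ∘ₗ TensorProduct.map G.κ G.κ := by
  have hτ : G.τ = I.T := by
    ext1
    refine LinearMap.ext fun a => LinearMap.ext fun b => ?_
    apply z_inj
    have := tau1 G I (z (a ⊗ₜ[ℂ] b))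
    rw [Sz, Sz] at this
    exact this
  have e1 : ∀ t, G.σ (G.κ.rTensor A t) = G.κ.lTensor A (I.T (G.σ' (I.T t))) := by
    intro t
    apply z_inj
    rw [← Sz G.σ, ← Kz G, A2T G I, Sz, Sz, Sz, LKz]
  have e2 : ∀ t, G.σ (G.κ.lTensor A t) = G.κ.rTensor A (I.T (G.σ' (I.T t))) := by
    intro t
    apply z_inj
    rw [← Sz G.σ, ← LKz G, A1T G I, Sz, Sz, Sz, Kz]
  have e3 : ∀ t, I.T (G.κ.lTensor A t) = G.κ.rTensor A (I.T t) := by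
    intro t
    apply z_inj
    rw [← Sz I.T, ← LKz G, tt2 G I, Sz, Kz]
  have e4 : ∀ t, I.T (G.κ.rTensor A t) = G.κ.lTensor A (I.T t) := by
    intro t
    apply z_inj
    rw [← Sz I.T, ← Kz G, tt1 G I, Sz, LKz]
  have s1 : ∀ t, G.σ (G.σ' t) = t := LinearMap.congr_fun G.σ_comp
  have s2 : ∀ t, G.σ' (G.σ t) = t := LinearMap.congr_fun G.comp_σ
  have m1 : ∀ t, TensorProduct.map G.κ G.κ t = G.κ.rTensor A (G.κ.lTensor A t) := by
    intro t
    exact (LinearMap.congr_fun (LinearMap.rTensor_comp_lTensor (f := G.κ) (g := G.κ)) t).symm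
  have m2 : ∀ t, TensorProduct.map G.κ G.κ t = G.κ.lTensor A (G.κ.rTensor A t) := by
    intro t
    exact (LinearMap.congr_fun (LinearMap.lTensor_comp_rTensor (f := G.κ) (g := G.κ)) t).symm
  have e5 : ∀ t, G.σ' (G.κ.rTensor A t) = G.κ.lTensor A (K G (G.σ (K G t))) := by
    intro t
    have h := congrArg G.σ' (e2 (K G (G.σ (K G t))))
    rw [s2, I.TK, s2, I.TK] at h
    exact h.symm
  rw [hτ]
  refine ⟨LinearMap.ext e1, LinearMap.ext e2, LinearMap.ext e3, LinearMap.ext e4,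
    LinearMap.ext fun t => ?_, LinearMap.ext fun t => ?_⟩
  · simp only [LinearMap.comp_apply]
    rw [m1, m2, e3, e4]
  · simp only [LinearMap.comp_apply]
    rw [m1 t, e1, e3, e5, e3, I.TK, I.KT, m2]

end BQGAux

/-- Antipode twisting relations: `σ(κ⊗id) = (id⊗κ)τσ⁻¹τ`, `σ(id⊗κ) = (κ⊗id)τσ⁻¹τ`,
`τ(id⊗κ) = (κ⊗id)τ`, `τ(κ⊗id) = (id⊗κ)τ`, and consequently
`(κ⊗κ)τ = τ(κ⊗κ)` and `(κ⊗κ)σ = σ(κ⊗κ)`. -/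
theorem bqg_antipode_twisting {A : Type*} [Ring A] [Algebra ℂ A] (G : BQG A) :
    G.σ ∘ₗ G.κ.rTensor A = G.κ.lTensor A ∘ₗ G.τ ∘ₗ G.σ' ∘ₗ G.τ ∧
    G.σ ∘ₗ G.κ.lTensor A = G.κ.rTensor A ∘ₗ G.τ ∘ₗ G.σ' ∘ₗ G.τ ∧
    G.τ ∘ₗ G.κ.lTensor A = G.κ.rTensor A ∘ₗ G.τ ∧
    G.τ ∘ₗ G.κ.rTensor A = G.κ.lTensor A ∘ₗ G.τ ∧
    TensorProduct.map G.κ G.κ ∘ₗ G.τ = G.τ ∘ₗ TensorProduct.map G.κ G.κ ∧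
    TensorProduct.map G.κ G.κ ∘ₗ G.σ = G.σ ∘ₗ TensorProduct.map G.κ G.κ := by
  by_cases h : ∀ x, G.ε x = 0
  · have hA : Subsingleton A := ⟨fun a b => by rw [BQGAux.sub G h a, BQGAux.sub G h b]⟩
    have hT : ∀ f g : T2 A →ₗ[ℂ] T2 A, f = g := by
      intro f g
      ext a b
      rw [Subsingleton.elim a 0]
      simp
    exact ⟨hT _ _, hT _ _, hT _ _, hT _ _, hT _ _, hT _ _⟩
  · obtain ⟨y, hy⟩ := not_forall.mp h
    have h0 : G.ε ((G.ε y)⁻¹ • y) = 1 := by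
      rw [map_smul, smul_eq_mul, inv_mul_cancel₀ hy]
    obtain ⟨I⟩ := BQGAux.exInv G _ h0
    exact BQGAux.main G I
end
end

section
/- In a braided quantum group, the braiding σ and the secondary braiding τ satisfy the full system of braid relations: for any α, β, γ ∈ {σ, τ} with (α,β,γ) in the admissible combinations listed—(σ,σ,σ), (τ,σ,σ) = (σ,σ,τ)-reversed, (σ,τ,σ), (σ,σ,τ), (τ,τ,σ), (τ,σ,τ), (σ,τ,τ), (τ,τ,τ)—the equation (α⊗id)(id⊗β)(γ⊗id) = (id⊗γ)(β⊗id)(id⊗α) holds. In particular, σ satisfies the braid equation (σ⊗id)(id⊗σ)(σ⊗id) = (id⊗σ)(σ⊗id)(id⊗σ), and τ satisfies (τ⊗id)(id⊗τ)(τ⊗id) = (id⊗τ)(τ⊗id)(id⊗τ). -/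
open TensorProduct LinearMap

noncomputable section

variable (A : Type*) [Ring A] [Algebra ℂ A]

variable {A}

namespace BQGP

universe u

variable {B : Type u} [Ring B] [Algebra ℂ B]
variable {X Y Z W V : Type u} [AddCommMonoid X] [Module ℂ X] [AddCommMonoid Y] [Module ℂ Y]
  [AddCommMonoid Z] [Module ℂ Z] [AddCommMonoid W] [Module ℂ W] [AddCommMonoid V] [Module ℂ V]

/-- Adding one idle strand on the left. -/
def l (g : X →ₗ[ℂ] Y) : B ⊗[ℂ] X →ₗ[ℂ] B ⊗[ℂ] Y := g.lTensor B

/-- A two-strand operator acting on the first two strands. -/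
def h22 (f : T2 B →ₗ[ℂ] T2 B) : B ⊗[ℂ] (B ⊗[ℂ] X) →ₗ[ℂ] B ⊗[ℂ] (B ⊗[ℂ] X) :=
  (TensorProduct.assoc ℂ B B X).toLinearMap ∘ₗ f.rTensor X ∘ₗ
    (TensorProduct.assoc ℂ B B X).symm.toLinearMap

/-- Multiplication of the first two strands. -/
def m : B ⊗[ℂ] (B ⊗[ℂ] X) →ₗ[ℂ] B ⊗[ℂ] X :=
  (mA (A := B)).rTensor X ∘ₗ (TensorProduct.assoc ℂ B B X).symm.toLinearMap

/-- A coproduct on the first strand. -/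
def h12 (f : B →ₗ[ℂ] T2 B) : B ⊗[ℂ] X →ₗ[ℂ] B ⊗[ℂ] (B ⊗[ℂ] X) :=
  (TensorProduct.assoc ℂ B B X).toLinearMap ∘ₗ f.rTensor X

/-- A functional on the first strand. -/
def h10 (f : B →ₗ[ℂ] ℂ) : B ⊗[ℂ] X →ₗ[ℂ] X :=
  (TensorProduct.lid ℂ X).toLinearMap ∘ₗ f.rTensor X

/-- A unit strand created on the left. -/
def U : X →ₗ[ℂ] B ⊗[ℂ] X := TensorProduct.mk ℂ B X 1

/-- A one-strand operator on the first strand. -/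
def h11 (f : B →ₗ[ℂ] B) : B ⊗[ℂ] X →ₗ[ℂ] B ⊗[ℂ] X := f.rTensor X

theorem l_tmul (g : X →ₗ[ℂ] Y) (b : B) (x : X) : l g (b ⊗ₜ[ℂ] x) = b ⊗ₜ g x := rfl
theorem h22_tmul (f : T2 B →ₗ[ℂ] T2 B) (a b : B) (x : X) :
    h22 f (a ⊗ₜ[ℂ] (b ⊗ₜ[ℂ] x)) = TensorProduct.assoc ℂ B B X (f (a ⊗ₜ b) ⊗ₜ x) := rfl
theorem m_tmul (a b : B) (x : X) :
    m (a ⊗ₜ[ℂ] (b ⊗ₜ[ℂ] x)) = (a * b) ⊗ₜ x := rfl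
theorem h12_tmul (f : B →ₗ[ℂ] T2 B) (a : B) (x : X) :
    h12 f (a ⊗ₜ[ℂ] x) = TensorProduct.assoc ℂ B B X (f a ⊗ₜ x) := rfl
theorem h10_tmul (f : B →ₗ[ℂ] ℂ) (a : B) (x : X) : h10 f (a ⊗ₜ[ℂ] x) = f a • x := rfl
theorem h11_tmul (f : B →ₗ[ℂ] B) (a : B) (x : X) : h11 f (a ⊗ₜ[ℂ] x) = f a ⊗ₜ x := rfl
theorem U_def (x : X) : U x = (1 : B) ⊗ₜ[ℂ] x := rfl

theorem l_comp (f : Y →ₗ[ℂ] Z) (g : X →ₗ[ℂ] Y) (t : B ⊗[ℂ] X) :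
    l (f ∘ₗ g) t = l f (l g t) := LinearMap.lTensor_comp_apply _ _ _ _

theorem l_id (t : B ⊗[ℂ] X) : l LinearMap.id t = t := by simp [l]

/-- Lifting of pointwise identities of composite maps. -/
theorem lc {f g : X →ₗ[ℂ] Y} (h : ∀ t, f t = g t) (t : B ⊗[ℂ] X) : l f t = l g t := by
  rw [LinearMap.ext h]

theorem L22 {a : Y →ₗ[ℂ] Z} {b : X →ₗ[ℂ] Y} {c : W →ₗ[ℂ] Z} {d : X →ₗ[ℂ] W}
    (h : ∀ t, a (b t) = c (d t)) (t : B ⊗[ℂ] X) : l a (l b t) = l c (l d t) := by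
  rw [← l_comp, ← l_comp]; exact lc h t

theorem L20 {a : Y →ₗ[ℂ] X} {b : X →ₗ[ℂ] Y}
    (h : ∀ t, a (b t) = t) (t : B ⊗[ℂ] X) : l a (l b t) = t := by
  rw [← l_comp]; exact (lc (g := LinearMap.id) h t).trans (l_id t)

theorem L21 {a : Y →ₗ[ℂ] Z} {b : X →ₗ[ℂ] Y} {c : X →ₗ[ℂ] Z}
    (h : ∀ t, a (b t) = c t) (t : B ⊗[ℂ] X) : l a (l b t) = l c t := by
  rw [← l_comp]; exact lc h t

/-! ### Naturality -/

theorem assoc_nat (g : X →ₗ[ℂ] Y) (u : T2 B) (x : X) :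
    TensorProduct.assoc ℂ B B Y (u ⊗ₜ g x) = l (l g) (TensorProduct.assoc ℂ B B X (u ⊗ₜ x)) := by
  induction u using TensorProduct.induction_on with
  | zero => simp
  | tmul a b => rfl
  | add a b ha hb => simp only [TensorProduct.add_tmul, map_add, ha, hb]

theorem h22_nat (f : T2 B →ₗ[ℂ] T2 B) (g : X →ₗ[ℂ] Y) (t : B ⊗[ℂ] (B ⊗[ℂ] X)) :
    h22 f (l (l g) t) = l (l g) (h22 f t) := by
  have : h22 f ∘ₗ l (l g) = l (l g) ∘ₗ h22 f := by
    ext a b x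
    exact assoc_nat g _ x
  exact LinearMap.congr_fun this t

theorem m_nat (g : X →ₗ[ℂ] Y) (t : B ⊗[ℂ] (B ⊗[ℂ] X)) :
    m (l (l g) t) = l g (m t) := by
  have : m ∘ₗ l (l g) = l (B := B) g ∘ₗ m := by
    ext a b x
    rfl
  exact LinearMap.congr_fun this t

theorem h12_nat (f : B →ₗ[ℂ] T2 B) (g : X →ₗ[ℂ] Y) (t : B ⊗[ℂ] X) :
    h12 f (l g t) = l (l g) (h12 f t) := by
  have : h12 f ∘ₗ l g = l (l g) ∘ₗ h12 f := by
    ext a x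
    exact assoc_nat g _ x
  exact LinearMap.congr_fun this t

theorem h10_nat (f : B →ₗ[ℂ] ℂ) (g : X →ₗ[ℂ] Y) (t : B ⊗[ℂ] X) :
    h10 f (l g t) = g (h10 f t) := by
  have : h10 f ∘ₗ l g = g ∘ₗ h10 f := by
    ext a x
    simp [l_tmul, h10_tmul]
  exact LinearMap.congr_fun this t

theorem h11_nat (f : B →ₗ[ℂ] B) (g : X →ₗ[ℂ] Y) (t : B ⊗[ℂ] X) :
    h11 f (l g t) = l g (h11 f t) := by
  have : h11 f ∘ₗ l g = l g ∘ₗ h11 f := by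
    ext a x
    rfl
  exact LinearMap.congr_fun this t

theorem U_nat (g : X →ₗ[ℂ] Y) (t : X) :
    U (B := B) (g t) = l g (U t) := rfl

/-! ### Passing from plain tensor powers to the generic setting -/

/-- Comparison map `T2 ⊗ X → B ⊗ (B ⊗ X)`. -/
def c2 : (T2 B) ⊗[ℂ] X →ₗ[ℂ] B ⊗[ℂ] (B ⊗[ℂ] X) := (TensorProduct.assoc ℂ B B X).toLinearMap
/-- Comparison map for three strands. -/
def c3 : (T3 B) ⊗[ℂ] X →ₗ[ℂ] B ⊗[ℂ] (B ⊗[ℂ] (B ⊗[ℂ] X)) :=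
  l c2 ∘ₗ (TensorProduct.assoc ℂ B (T2 B) X).toLinearMap
/-- Comparison map for four strands. -/
def c4 : (T4 B) ⊗[ℂ] X →ₗ[ℂ] B ⊗[ℂ] (B ⊗[ℂ] (B ⊗[ℂ] (B ⊗[ℂ] X))) :=
  l c3 ∘ₗ (TensorProduct.assoc ℂ B (T3 B) X).toLinearMap

theorem c2_surj : Function.Surjective (c2 (B := B) (X := X)) :=
  (TensorProduct.assoc ℂ B B X).surjective
theorem c3_surj : Function.Surjective (c3 (B := B) (X := X)) :=
  (LinearMap.lTensor_surjective B c2_surj).comp (TensorProduct.assoc ℂ B (T2 B) X).surjective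

theorem c3_tmul (a : B) (u : T2 B) (x : X) : c3 ((a ⊗ₜ[ℂ] u) ⊗ₜ[ℂ] x) = a ⊗ₜ c2 (u ⊗ₜ x) := rfl
theorem c4_tmul (a : B) (u : T3 B) (x : X) : c4 ((a ⊗ₜ[ℂ] u) ⊗ₜ[ℂ] x) = a ⊗ₜ c3 (u ⊗ₜ x) := rfl

theorem c3_assoc (u : T2 B) (c : B) (x : X) :
    c3 (TensorProduct.assoc ℂ B B B (u ⊗ₜ[ℂ] c) ⊗ₜ[ℂ] x)
      = TensorProduct.assoc ℂ B B (B ⊗[ℂ] X) (u ⊗ₜ (c ⊗ₜ x)) := by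
  induction u using TensorProduct.induction_on with
  | zero => simp
  | tmul a b => rfl
  | add a b ha hb => simp only [TensorProduct.add_tmul, map_add, ha, hb]

theorem c4_assoc (u v : T2 B) (x : X) :
    c4 (TensorProduct.assoc ℂ B B (T2 B) (u ⊗ₜ[ℂ] v) ⊗ₜ[ℂ] x)
      = TensorProduct.assoc ℂ B B (B ⊗[ℂ] (B ⊗[ℂ] X)) (u ⊗ₜ (c2 (v ⊗ₜ x))) := by
  induction u using TensorProduct.induction_on with
  | zero => simp
  | tmul a b => rfl
  | add a b ha hb => simp only [TensorProduct.add_tmul, map_add, ha, hb]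

theorem i2_h22 (f : T2 B →ₗ[ℂ] T2 B) (t : T2 B ⊗[ℂ] X) :
    h22 f (c2 t) = c2 (f.rTensor X t) := by
  simp [h22, c2]

theorem i3_op12 (f : T2 B →ₗ[ℂ] T2 B) (t : T3 B ⊗[ℂ] X) :
    h22 f (c3 t) = c3 ((op12 f).rTensor X t) := by
  have : h22 f ∘ₗ c3 = c3 ∘ₗ (op12 f).rTensor X := by
    ext a b c x
    exact (c3_assoc _ c x).symm
  exact LinearMap.congr_fun this t

theorem i3_op23 (f : T2 B →ₗ[ℂ] T2 B) (t : T3 B ⊗[ℂ] X) :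
    l (h22 f) (c3 t) = c3 ((op23 f).rTensor X t) := by
  have : l (h22 f) ∘ₗ c3 = c3 ∘ₗ (op23 f).rTensor X := by
    ext a b c x
    rfl
  exact LinearMap.congr_fun this t

theorem i4_op12 (f : T2 B →ₗ[ℂ] T2 B) (t : T4 B ⊗[ℂ] X) :
    h22 f (c4 t) = c4 ((op12_4 f).rTensor X t) := by
  have : h22 f ∘ₗ c4 = c4 ∘ₗ (op12_4 f).rTensor X := by
    ext a b c d x
    exact (c4_assoc _ (c ⊗ₜ d) x).symm
  exact LinearMap.congr_fun this t

theorem i4_op23 (f : T2 B →ₗ[ℂ] T2 B) (t : T4 B ⊗[ℂ] X) :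
    l (h22 f) (c4 t) = c4 ((op23_4 f).rTensor X t) := by
  have : l (h22 f) ∘ₗ c4 = c4 ∘ₗ (op23_4 f).rTensor X := by
    ext a b c d x
    change a ⊗ₜ[ℂ] h22 f (c3 ((b ⊗ₜ[ℂ] (c ⊗ₜ[ℂ] d)) ⊗ₜ[ℂ] x)) = _
    rw [i3_op12]
    rfl
  exact LinearMap.congr_fun this t

theorem i4_op34 (f : T2 B →ₗ[ℂ] T2 B) (t : T4 B ⊗[ℂ] X) :
    l (l (h22 f)) (c4 t) = c4 ((op34_4 f).rTensor X t) := by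
  have : l (l (h22 f)) ∘ₗ c4 = c4 ∘ₗ (op34_4 f).rTensor X := by
    ext a b c d x
    rfl
  exact LinearMap.congr_fun this t

theorem i_m12 (t : T3 B ⊗[ℂ] X) : m (c3 t) = c2 (m12.rTensor X t) := by
  have : m ∘ₗ c3 = c2 ∘ₗ m12.rTensor (R := ℂ) (M := X) (N := T3 B) := by
    ext a b c x
    rfl
  exact LinearMap.congr_fun this t

theorem i_m23 (t : T3 B ⊗[ℂ] X) : l m (c3 t) = c2 (m23.rTensor X t) := by
  have : l m ∘ₗ c3 = c2 ∘ₗ m23.rTensor (R := ℂ) (M := X) (N := T3 B) := by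
    ext a b c x
    rfl
  exact LinearMap.congr_fun this t

theorem i_mm (t : T4 B ⊗[ℂ] X) : m (l (l m) (c4 t)) = c2 (mm.rTensor X t) := by
  have : m ∘ₗ l (l m) ∘ₗ c4 = c2 ∘ₗ mm.rTensor (R := ℂ) (M := X) (N := T4 B) := by
    ext a b c d x
    rfl
  exact LinearMap.congr_fun this t

theorem i_p1 (f : B →ₗ[ℂ] T2 B) (t : T2 B ⊗[ℂ] X) :
    h12 f (c2 t) = c3 (((TensorProduct.assoc ℂ B B B).toLinearMap ∘ₗ f.rTensor B).rTensor X t) := by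
  have : h12 f ∘ₗ c2 =
      c3 ∘ₗ ((TensorProduct.assoc ℂ B B B).toLinearMap ∘ₗ f.rTensor B).rTensor X := by
    ext a b x
    exact (c3_assoc _ b x).symm
  exact LinearMap.congr_fun this t

theorem i_p2 (f : B →ₗ[ℂ] T2 B) (t : T2 B ⊗[ℂ] X) :
    l (h12 f) (c2 t) = c3 ((f.lTensor B).rTensor X t) := by
  have : l (h12 f) ∘ₗ c2 = c3 ∘ₗ (f.lTensor B).rTensor X := by
    ext a b x
    rfl
  exact LinearMap.congr_fun this t

theorem i_p23 (f : B →ₗ[ℂ] T2 B) (t : T3 B ⊗[ℂ] X) :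
    l (h12 f) (c3 t) =
      c4 ((((TensorProduct.assoc ℂ B B B).toLinearMap ∘ₗ f.rTensor B).lTensor B).rTensor X t) := by
  have : l (h12 f) ∘ₗ c3 =
      c4 ∘ₗ (((TensorProduct.assoc ℂ B B B).toLinearMap ∘ₗ f.rTensor B).lTensor B).rTensor X := by
    ext a b c x
    change a ⊗ₜ[ℂ] h12 f (c2 ((b ⊗ₜ[ℂ] c) ⊗ₜ[ℂ] x)) = _
    rw [i_p1]
    rfl
  exact LinearMap.congr_fun this t

theorem i_p14 (f : B →ₗ[ℂ] T2 B) (t : T3 B ⊗[ℂ] X) :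
    h12 f (c3 t) =
      c4 (((TensorProduct.assoc ℂ B B (T2 B)).toLinearMap ∘ₗ f.rTensor (T2 B)).rTensor X t) := by
  have : h12 f ∘ₗ c3 =
      c4 ∘ₗ ((TensorProduct.assoc ℂ B B (T2 B)).toLinearMap ∘ₗ f.rTensor (T2 B)).rTensor X := by
    ext a b c x
    exact (c4_assoc _ (b ⊗ₜ c) x).symm
  exact LinearMap.congr_fun this t

/-! ### The structure laws in generic form -/

variable (G : BQG B)

/-- The braiding on the first two strands. -/
def s : B ⊗[ℂ] (B ⊗[ℂ] X) →ₗ[ℂ] B ⊗[ℂ] (B ⊗[ℂ] X) := h22 G.σ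
/-- The inverse braiding on the first two strands. -/
def si : B ⊗[ℂ] (B ⊗[ℂ] X) →ₗ[ℂ] B ⊗[ℂ] (B ⊗[ℂ] X) := h22 G.σ'
def p : B ⊗[ℂ] X →ₗ[ℂ] B ⊗[ℂ] (B ⊗[ℂ] X) := h12 G.φ
/-- The counit on the first strand. -/
def E : B ⊗[ℂ] X →ₗ[ℂ] X := h10 G.ε
/-- The antipode on the first strand. -/
def k : B ⊗[ℂ] X →ₗ[ℂ] B ⊗[ℂ] X := h11 G.κ

theorem s_si (t : B ⊗[ℂ] (B ⊗[ℂ] X)) : s G (si G t) = t := by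
  obtain ⟨v, rfl⟩ := c2_surj t
  simp only [s, si, i2_h22]
  rw [← LinearMap.rTensor_comp_apply, G.σ_comp]; simp

theorem si_s (t : B ⊗[ℂ] (B ⊗[ℂ] X)) : si G (s G t) = t := by
  obtain ⟨v, rfl⟩ := c2_surj t
  simp only [s, si, i2_h22]
  rw [← LinearMap.rTensor_comp_apply, G.comp_σ]; simp

theorem coassoc (t : B ⊗[ℂ] X) : p G (p G t) = l (p G) (p G t) := by
  have h := G.coassoc
  have : p G ∘ₗ p G = l (p G) ∘ₗ p G (X := X) := by
    ext a x
    have h := congrArg (fun f => c3 ((f a) ⊗ₜ[ℂ] x)) h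
    change p G (c2 (G.φ a ⊗ₜ[ℂ] x)) = l (p G) (c2 (G.φ a ⊗ₜ[ℂ] x))
    simp only [p, i_p1, i_p2]
    exact h
  exact LinearMap.congr_fun this t

theorem E_p (t : B ⊗[ℂ] X) : E G (p G t) = t := by
  have h := G.counit_left
  have : E G ∘ₗ p G = LinearMap.id (M := B ⊗[ℂ] X) := by
    ext a x
    have h := congrArg (fun f => (f a) ⊗ₜ[ℂ] x) h
    have key : ∀ u : T2 B, E G (c2 (u ⊗ₜ[ℂ] x)) =
        (TensorProduct.lid ℂ B (G.ε.rTensor B u)) ⊗ₜ[ℂ] x := by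
      intro u
      induction u using TensorProduct.induction_on with
      | zero => simp
      | tmul a b => exact TensorProduct.smul_tmul' (G.ε a) b x
      | add a b ha hb => simp only [TensorProduct.add_tmul, map_add, ha, hb]
    exact (key (G.φ a)).trans h
  exact LinearMap.congr_fun this t

theorem lE_p (t : B ⊗[ℂ] X) : l (E G) (p G t) = t := by
  have h := G.counit_right
  have : l (E G) ∘ₗ p G = LinearMap.id (M := B ⊗[ℂ] X) := by
    ext a x
    have h := congrArg (fun f => (f a) ⊗ₜ[ℂ] x) h
    have key : ∀ u : T2 B, l (E G) (c2 (u ⊗ₜ[ℂ] x)) =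
        (TensorProduct.rid ℂ B (G.ε.lTensor B u)) ⊗ₜ[ℂ] x := by
      intro u
      induction u using TensorProduct.induction_on with
      | zero => simp
      | tmul a b =>
        change a ⊗ₜ[ℂ] (G.ε b • x) = (G.ε b • a) ⊗ₜ[ℂ] x
        rw [TensorProduct.tmul_smul, TensorProduct.smul_tmul']
      | add a b ha hb => simp only [TensorProduct.add_tmul, map_add, ha, hb]
    exact (key (G.φ a)).trans h
  exact LinearMap.congr_fun this t

theorem s_m (t : B ⊗[ℂ] (B ⊗[ℂ] (B ⊗[ℂ] X))) : s G (m t) = l m (s G (l (s G) t)) := by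
  obtain ⟨v, rfl⟩ := c3_surj t
  simp only [s, i3_op23, i3_op12, i_m12, i_m23, i2_h22]
  simp only [← LinearMap.rTensor_comp_apply]
  rw [G.braid_mul_left]

theorem s_lm (t : B ⊗[ℂ] (B ⊗[ℂ] (B ⊗[ℂ] X))) : s G (l m t) = m (l (s G) (s G t)) := by
  obtain ⟨v, rfl⟩ := c3_surj t
  simp only [s, i3_op23, i3_op12, i_m12, i_m23, i2_h22]
  simp only [← LinearMap.rTensor_comp_apply]
  rw [G.braid_mul_right]

theorem p_m (t : B ⊗[ℂ] (B ⊗[ℂ] X)) :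
    p G (m t) = m (l (l m) (l (s G) (p G (l (p G) t)))) := by
  have h := G.comul_mul
  have : p G ∘ₗ m = m ∘ₗ l (l m) ∘ₗ l (s G) ∘ₗ p G ∘ₗ l (p G (X := X)) := by
    ext a b x
    have h := congrArg (fun f => c2 ((f (a ⊗ₜ b)) ⊗ₜ[ℂ] x)) h
    refine Eq.trans h ?_
    change _ = m (l (l m) (l (h22 G.σ) (h12 G.φ (l (h12 G.φ) (c2 ((a ⊗ₜ[ℂ] b) ⊗ₜ[ℂ] x))))))
    rw [i_p2, i_p14, i4_op23, i_mm]
    rfl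
  exact LinearMap.congr_fun this t

theorem mixed (t : B ⊗[ℂ] (B ⊗[ℂ] X)) :
    s G (l (p G) (si G (l (p G) t))) = l (l (s G)) (l (p G) (l (si G) (p G t))) := by
  obtain ⟨v, rfl⟩ := c2_surj t
  simp only [s, si, p, i3_op23, i3_op12, i_p1, i_p2, i_p23, i4_op12, i4_op34]
  simp only [← LinearMap.rTensor_comp_apply]
  rw [G.mixed_coassoc]

theorem m_k_p (t : B ⊗[ℂ] X) : m (k G (p G t)) = U (E G t) := by
  have h := G.antipode_left
  have : m ∘ₗ k G ∘ₗ p G = U ∘ₗ E G (X := X) := by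
    ext a x
    have h := congrArg (fun f => (f a) ⊗ₜ[ℂ] x) h
    have key : ∀ u : T2 B, m (k G (c2 (u ⊗ₜ[ℂ] x))) = (mA (G.κ.rTensor B u)) ⊗ₜ[ℂ] x := by
      intro u
      induction u using TensorProduct.induction_on with
      | zero => simp
      | tmul a b => rfl
      | add a b ha hb => simp only [TensorProduct.add_tmul, map_add, ha, hb]
    refine (key (G.φ a)).trans (h.trans ?_)
    change (algebraMap ℂ B (G.ε a)) ⊗ₜ[ℂ] x = 1 ⊗ₜ[ℂ] (G.ε a • x)
    rw [Algebra.algebraMap_eq_smul_one, TensorProduct.tmul_smul, TensorProduct.smul_tmul']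
  exact LinearMap.congr_fun this t

theorem m_lk_p (t : B ⊗[ℂ] X) : m (l (k G) (p G t)) = U (E G t) := by
  have h := G.antipode_right
  have : m ∘ₗ l (k G) ∘ₗ p G = U ∘ₗ E G (X := X) := by
    ext a x
    have h := congrArg (fun f => (f a) ⊗ₜ[ℂ] x) h
    have key : ∀ u : T2 B, m (l (k G) (c2 (u ⊗ₜ[ℂ] x))) = (mA (G.κ.lTensor B u)) ⊗ₜ[ℂ] x := by
      intro u
      induction u using TensorProduct.induction_on with
      | zero => simp
      | tmul a b => rfl
      | add a b ha hb => simp only [TensorProduct.add_tmul, map_add, ha, hb]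
    refine (key (G.φ a)).trans (h.trans ?_)
    change (algebraMap ℂ B (G.ε a)) ⊗ₜ[ℂ] x = 1 ⊗ₜ[ℂ] (G.ε a • x)
    rw [Algebra.algebraMap_eq_smul_one, TensorProduct.tmul_smul, TensorProduct.smul_tmul']
  exact LinearMap.congr_fun this t

theorem m_U (t : B ⊗[ℂ] X) : m (U t) = t := by
  have : m ∘ₗ U = LinearMap.id (M := B ⊗[ℂ] X) := by
    ext a x
    change (1 * a) ⊗ₜ[ℂ] x = a ⊗ₜ x
    rw [one_mul]
  exact LinearMap.congr_fun this t

theorem m_lU (t : B ⊗[ℂ] X) : m (l U t) = t := by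
  have : m ∘ₗ l U = LinearMap.id (M := B ⊗[ℂ] X) := by
    ext a x
    change (a * 1) ⊗ₜ[ℂ] x = a ⊗ₜ x
    rw [mul_one]
  exact LinearMap.congr_fun this t

theorem m_m (t : B ⊗[ℂ] (B ⊗[ℂ] (B ⊗[ℂ] X))) : m (m t) = m (l m t) := by
  have : m ∘ₗ m = m ∘ₗ l (B := B) (m (X := X)) := by
    ext a b c x
    change (a * b * c) ⊗ₜ[ℂ] x = (a * (b * c)) ⊗ₜ x
    rw [mul_assoc]
  exact LinearMap.congr_fun this t

theorem E_U (x : X) : E G (U x) = G.ε 1 • x := rfl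

@[simp] theorem s_nat0 (G : BQG B) (g : X →ₗ[ℂ] Y) (t : B ⊗[ℂ] (B ⊗[ℂ] X)) :
    (s G) (l (l g) t) = l (l g) (s G t) := h22_nat G.σ g t
@[simp] theorem s_nat1 (G : BQG B) (g : X →ₗ[ℂ] Y) (t : B ⊗[ℂ] (B ⊗[ℂ] (B ⊗[ℂ] X))) :
    (l (s G)) (l (l (l g)) t) = l (l (l g)) (l (s G) t) := L22 (s_nat0 G g) t
@[simp] theorem s_nat2 (G : BQG B) (g : X →ₗ[ℂ] Y) (t : B ⊗[ℂ] (B ⊗[ℂ] (B ⊗[ℂ] (B ⊗[ℂ] X)))) :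
    (l (l (s G))) (l (l (l (l g))) t) = l (l (l (l g))) (l (l (s G)) t) := L22 (s_nat1 G g) t
@[simp] theorem s_nat3 (G : BQG B) (g : X →ₗ[ℂ] Y) (t : B ⊗[ℂ] (B ⊗[ℂ] (B ⊗[ℂ] (B ⊗[ℂ] (B ⊗[ℂ] X))))) :
    (l (l (l (s G)))) (l (l (l (l (l g)))) t) = l (l (l (l (l g)))) (l (l (l (s G))) t) := L22 (s_nat2 G g) t
@[simp] theorem si_nat0 (G : BQG B) (g : X →ₗ[ℂ] Y) (t : B ⊗[ℂ] (B ⊗[ℂ] X)) :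
    (si G) (l (l g) t) = l (l g) (si G t) := h22_nat G.σ' g t
@[simp] theorem si_nat1 (G : BQG B) (g : X →ₗ[ℂ] Y) (t : B ⊗[ℂ] (B ⊗[ℂ] (B ⊗[ℂ] X))) :
    (l (si G)) (l (l (l g)) t) = l (l (l g)) (l (si G) t) := L22 (si_nat0 G g) t
@[simp] theorem si_nat2 (G : BQG B) (g : X →ₗ[ℂ] Y) (t : B ⊗[ℂ] (B ⊗[ℂ] (B ⊗[ℂ] (B ⊗[ℂ] X)))) :
    (l (l (si G))) (l (l (l (l g))) t) = l (l (l (l g))) (l (l (si G)) t) := L22 (si_nat1 G g) t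
@[simp] theorem si_nat3 (G : BQG B) (g : X →ₗ[ℂ] Y) (t : B ⊗[ℂ] (B ⊗[ℂ] (B ⊗[ℂ] (B ⊗[ℂ] (B ⊗[ℂ] X))))) :
    (l (l (l (si G)))) (l (l (l (l (l g)))) t) = l (l (l (l (l g)))) (l (l (l (si G))) t) := L22 (si_nat2 G g) t
@[simp] theorem p_nat0 (G : BQG B) (g : X →ₗ[ℂ] Y) (t : B ⊗[ℂ] X) :
    (p G) (l g t) = l (l g) (p G t) := h12_nat G.φ g t
@[simp] theorem p_nat1 (G : BQG B) (g : X →ₗ[ℂ] Y) (t : B ⊗[ℂ] (B ⊗[ℂ] X)) :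
    (l (p G)) (l (l g) t) = l (l (l g)) (l (p G) t) := L22 (p_nat0 G g) t
@[simp] theorem p_nat2 (G : BQG B) (g : X →ₗ[ℂ] Y) (t : B ⊗[ℂ] (B ⊗[ℂ] (B ⊗[ℂ] X))) :
    (l (l (p G))) (l (l (l g)) t) = l (l (l (l g))) (l (l (p G)) t) := L22 (p_nat1 G g) t
@[simp] theorem p_nat3 (G : BQG B) (g : X →ₗ[ℂ] Y) (t : B ⊗[ℂ] (B ⊗[ℂ] (B ⊗[ℂ] (B ⊗[ℂ] X)))) :
    (l (l (l (p G)))) (l (l (l (l g))) t) = l (l (l (l (l g)))) (l (l (l (p G))) t) := L22 (p_nat2 G g) t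
@[simp] theorem m_nat0 (g : X →ₗ[ℂ] Y) (t : B ⊗[ℂ] (B ⊗[ℂ] X)) :
    m (l (l g) t) = l g (m t) := m_nat g t
@[simp] theorem m_nat1 (g : X →ₗ[ℂ] Y) (t : B ⊗[ℂ] (B ⊗[ℂ] (B ⊗[ℂ] X))) :
    (l m) (l (l (l g)) t) = l (l g) (l m t) := L22 (m_nat0 g) t
@[simp] theorem m_nat2 (g : X →ₗ[ℂ] Y) (t : B ⊗[ℂ] (B ⊗[ℂ] (B ⊗[ℂ] (B ⊗[ℂ] X)))) :
    (l (l m)) (l (l (l (l g))) t) = l (l (l g)) (l (l m) t) := L22 (m_nat1 g) t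
@[simp] theorem m_nat3 (g : X →ₗ[ℂ] Y) (t : B ⊗[ℂ] (B ⊗[ℂ] (B ⊗[ℂ] (B ⊗[ℂ] (B ⊗[ℂ] X))))) :
    (l (l (l m))) (l (l (l (l (l g)))) t) = l (l (l (l g))) (l (l (l m)) t) := L22 (m_nat2 g) t
@[simp] theorem E_nat0 (G : BQG B) (g : X →ₗ[ℂ] Y) (t : B ⊗[ℂ] X) :
    (E G) (l g t) = g (E G t) := h10_nat G.ε g t
@[simp] theorem E_nat1 (G : BQG B) (g : X →ₗ[ℂ] Y) (t : B ⊗[ℂ] (B ⊗[ℂ] X)) :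
    (l (E G)) (l (l g) t) = l g (l (E G) t) := L22 (E_nat0 G g) t
@[simp] theorem E_nat2 (G : BQG B) (g : X →ₗ[ℂ] Y) (t : B ⊗[ℂ] (B ⊗[ℂ] (B ⊗[ℂ] X))) :
    (l (l (E G))) (l (l (l g)) t) = l (l g) (l (l (E G)) t) := L22 (E_nat1 G g) t
@[simp] theorem E_nat3 (G : BQG B) (g : X →ₗ[ℂ] Y) (t : B ⊗[ℂ] (B ⊗[ℂ] (B ⊗[ℂ] (B ⊗[ℂ] X)))) :
    (l (l (l (E G)))) (l (l (l (l g))) t) = l (l (l g)) (l (l (l (E G))) t) := L22 (E_nat2 G g) t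
@[simp] theorem k_nat0 (G : BQG B) (g : X →ₗ[ℂ] Y) (t : B ⊗[ℂ] X) :
    (k G) (l g t) = l g (k G t) := h11_nat G.κ g t
@[simp] theorem k_nat1 (G : BQG B) (g : X →ₗ[ℂ] Y) (t : B ⊗[ℂ] (B ⊗[ℂ] X)) :
    (l (k G)) (l (l g) t) = l (l g) (l (k G) t) := L22 (k_nat0 G g) t
@[simp] theorem k_nat2 (G : BQG B) (g : X →ₗ[ℂ] Y) (t : B ⊗[ℂ] (B ⊗[ℂ] (B ⊗[ℂ] X))) :
    (l (l (k G))) (l (l (l g)) t) = l (l (l g)) (l (l (k G)) t) := L22 (k_nat1 G g) t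
@[simp] theorem k_nat3 (G : BQG B) (g : X →ₗ[ℂ] Y) (t : B ⊗[ℂ] (B ⊗[ℂ] (B ⊗[ℂ] (B ⊗[ℂ] X)))) :
    (l (l (l (k G)))) (l (l (l (l g))) t) = l (l (l (l g))) (l (l (l (k G))) t) := L22 (k_nat2 G g) t
@[simp] theorem s_si1 (t : B ⊗[ℂ] (B ⊗[ℂ] (B ⊗[ℂ] X))) : l (s G) (l (si G) t) = t := L20 (s_si G) t
@[simp] theorem si_s1 (t : B ⊗[ℂ] (B ⊗[ℂ] (B ⊗[ℂ] X))) : l (si G) (l (s G) t) = t := L20 (si_s G) t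
@[simp] theorem coassoc1 (t : B ⊗[ℂ] (B ⊗[ℂ] X)) : l (p G) (l (p G) t) = l (l (p G)) (l (p G) t) := L22 (coassoc G) t
@[simp] theorem coassoc2 (t : B ⊗[ℂ] (B ⊗[ℂ] (B ⊗[ℂ] X))) : l (l (p G)) (l (l (p G)) t) = l (l (l (p G))) (l (l (p G)) t) :=
  L22 (coassoc1 G) t
@[simp] theorem E_p1 (t : B ⊗[ℂ] (B ⊗[ℂ] X)) : l (E G) (l (p G) t) = t := L20 (E_p G) t
@[simp] theorem lE_p1 (t : B ⊗[ℂ] (B ⊗[ℂ] X)) : l (l (E G)) (l (p G) t) = t := L20 (lE_p G) t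
@[simp] theorem E_p2 (t : B ⊗[ℂ] (B ⊗[ℂ] (B ⊗[ℂ] X))) : l (l (E G)) (l (l (p G)) t) = t := L20 (E_p1 G) t
@[simp] theorem lE_p2 (t : B ⊗[ℂ] (B ⊗[ℂ] (B ⊗[ℂ] X))) : l (l (l (E G))) (l (l (p G)) t) = t := L20 (lE_p1 G) t
attribute [simp] s_si si_s coassoc E_p lE_p

theorem L32
    {a : Y →ₗ[ℂ] Z} {b : X →ₗ[ℂ] Y} {c : W →ₗ[ℂ] X} {d : V →ₗ[ℂ] Z} {e : W →ₗ[ℂ] V}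
    (h : ∀ t, a (b (c t)) = d (e t)) (t : B ⊗[ℂ] W) : l a (l b (l c t)) = l d (l e t) := by
  simp only [← l_comp]; exact lc h t
theorem L31 {a : Y →ₗ[ℂ] Z} {b : X →ₗ[ℂ] Y} {c : W →ₗ[ℂ] X} {d : W →ₗ[ℂ] Z}
    (h : ∀ t, a (b (c t)) = d t) (t : B ⊗[ℂ] W) : l a (l b (l c t)) = l d t := by
  simp only [← l_comp]; exact lc h t
theorem L30 {a : Y →ₗ[ℂ] W} {b : X →ₗ[ℂ] Y} {c : W →ₗ[ℂ] X}
    (h : ∀ t, a (b (c t)) = t) (t : B ⊗[ℂ] W) : l a (l b (l c t)) = t :=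
  (L31 (d := LinearMap.id) h t).trans (l_id t)
theorem L33 {V' : Type u} [AddCommMonoid V'] [Module ℂ V']
    {a : Y →ₗ[ℂ] Z} {b : X →ₗ[ℂ] Y} {c : W →ₗ[ℂ] X} {d : V →ₗ[ℂ] Z} {e : V' →ₗ[ℂ] V}
    {f : W →ₗ[ℂ] V'}
    (h : ∀ t, a (b (c t)) = d (e (f t))) (t : B ⊗[ℂ] W) :
    l a (l b (l c t)) = l d (l e (l f t)) := by
  simp only [← l_comp]; exact lc h t

/-- Cancellation of a strand split off on the left. -/
theorem stripL {Y Z : B ⊗[ℂ] X →ₗ[ℂ] B ⊗[ℂ] W}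
    (h : ∀ t : B ⊗[ℂ] X, m (l Y (p G t)) = m (l Z (p G t))) (t : B ⊗[ℂ] X) : Y t = Z t := by
  have key : ∀ Y : B ⊗[ℂ] X →ₗ[ℂ] B ⊗[ℂ] W, m (k G (l (m ∘ₗ l Y ∘ₗ p G) (p G t))) = Y t := by
    intro Y
    rw [l_comp, l_comp, ← coassoc, k_nat0, ← m_m, k_nat0, m_nat0, m_k_p, E_p, ← U_nat, m_U]
  rw [← key Y, ← key Z, LinearMap.ext (f := m ∘ₗ l Y ∘ₗ p G) (g := m ∘ₗ l Z ∘ₗ p G) h]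

/-- The functional `ε m`, and other functionals of two strands. -/
structure Fn (B : Type u) [Ring B] [Algebra ℂ B] where
  ev : ∀ {X : Type u} [AddCommMonoid X] [Module ℂ X], B ⊗[ℂ] (B ⊗[ℂ] X) →ₗ[ℂ] X
  nat : ∀ {X Y : Type u} [AddCommMonoid X] [Module ℂ X] [AddCommMonoid Y] [Module ℂ Y]
    (g : X →ₗ[ℂ] Y) (t : B ⊗[ℂ] (B ⊗[ℂ] X)), ev (l (l g) t) = g (ev t)

@[simp] theorem Fn_nat0 (a : Fn B) (q : X →ₗ[ℂ] Y) (t : B ⊗[ℂ] (B ⊗[ℂ] X)) :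
    a.ev (l (l q) t) = q (a.ev t) := a.nat q t
@[simp] theorem Fn_nat1 (a : Fn B) (q : X →ₗ[ℂ] Y) (t : B ⊗[ℂ] (B ⊗[ℂ] (B ⊗[ℂ] X))) :
    l a.ev (l (l (l q)) t) = l q (l a.ev t) := L22 (a.nat q) t
@[simp] theorem Fn_nat2 (a : Fn B) (q : X →ₗ[ℂ] Y) (t : B ⊗[ℂ] (B ⊗[ℂ] (B ⊗[ℂ] (B ⊗[ℂ] X)))) :
    l (l a.ev) (l (l (l (l q))) t) = l (l q) (l (l a.ev) t) := L22 (Fn_nat1 a q) t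

/-- `ε m` -/
def e : Fn B := ⟨E G ∘ₗ m, by intros; simp⟩
/-- `(ε ⊗ ε) σ` -/
def g : Fn B := ⟨E G ∘ₗ E G ∘ₗ s G, by intros; simp⟩
/-- `(ε ⊗ ε) σ⁻¹` -/
def f : Fn B := ⟨E G ∘ₗ E G ∘ₗ si G, by intros; simp⟩

theorem e_def (t : B ⊗[ℂ] (B ⊗[ℂ] X)) : (e G).ev t = E G (m t) := rfl
theorem g_def (t : B ⊗[ℂ] (B ⊗[ℂ] X)) : (g G).ev t = E G (E G (s G t)) := rfl
theorem f_def (t : B ⊗[ℂ] (B ⊗[ℂ] X)) : (f G).ev t = E G (E G (si G t)) := rfl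

/-- Two-sided colinear operator given by a functional. -/
def R (a : Fn B) : B ⊗[ℂ] (B ⊗[ℂ] X) →ₗ[ℂ] B ⊗[ℂ] (B ⊗[ℂ] X) := l a.ev ∘ₗ p G ∘ₗ l (p G)

theorem R_def (a : Fn B) (t : B ⊗[ℂ] (B ⊗[ℂ] X)) : R G a t = l a.ev (p G (l (p G) t)) := rfl

@[simp] theorem R_nat0 (a : Fn B) (q : X →ₗ[ℂ] Y) (t : B ⊗[ℂ] (B ⊗[ℂ] X)) :
    R G a (l (l q) t) = l (l q) (R G a t) := by simp [R_def]
@[simp] theorem R_nat1 (a : Fn B) (q : X →ₗ[ℂ] Y) (t : B ⊗[ℂ] (B ⊗[ℂ] (B ⊗[ℂ] X))) :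
    l (R G a) (l (l (l q)) t) = l (l (l q)) (l (R G a) t) := L22 (R_nat0 G a q) t

theorem p_R (a : Fn B) (t : B ⊗[ℂ] (B ⊗[ℂ] X)) : p G (R G a t) = l (R G a) (p G t) := by
  have h : l (R G a) (p G t) = l (l a.ev) (l (p G) (l (l (p G)) (p G t))) := by
    rw [← l_comp, ← l_comp]; rfl
  rw [h, R_def, p_nat0, coassoc, p_nat0]

theorem lp_R (a : Fn B) (t : B ⊗[ℂ] (B ⊗[ℂ] X)) : l (p G) (R G a t) = R G a (l (p G) t) := by
  rw [R_def, R_def, coassoc1, p_nat0 G (l (p G)), Fn_nat1]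

theorem R_comm (a b : Fn B) (t : B ⊗[ℂ] (B ⊗[ℂ] (B ⊗[ℂ] X))) : R G a (l (R G b) t) = l (R G b) (R G a t) := by
  rw [R_def, L22 (p_R G b) t, p_nat0, Fn_nat1]; rfl

theorem R_comp_one {a b : Fn B} (h : ∀ {X : Type u} [AddCommMonoid X] [Module ℂ X]
    (t : B ⊗[ℂ] (B ⊗[ℂ] X)), a.ev (R G b t) = E G (E G t)) (t : B ⊗[ℂ] (B ⊗[ℂ] X)) : R G a (R G b t) = t := by
  rw [R_def, lp_R, p_R, ← l_comp, lc (g := E G ∘ₗ E G) h, l_comp]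
  simp

/-! ### Units -/

theorem unit_right {b : ∀ {X : Type u} [AddCommMonoid X] [Module ℂ X],
    B ⊗[ℂ] (B ⊗[ℂ] X) →ₗ[ℂ] B ⊗[ℂ] (B ⊗[ℂ] X)}
    (hn : ∀ {X Y : Type u} [AddCommMonoid X] [Module ℂ X] [AddCommMonoid Y] [Module ℂ Y]
      (g : X →ₗ[ℂ] Y) (t : B ⊗[ℂ] (B ⊗[ℂ] X)), b (l (l g) t) = l (l g) (b t))
    (hs : ∀ {X : Type u} [AddCommMonoid X] [Module ℂ X], Function.Surjective (b (X := X)))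
    (hm : ∀ {X : Type u} [AddCommMonoid X] [Module ℂ X] (t : B ⊗[ℂ] (B ⊗[ℂ] (B ⊗[ℂ] X))),
      b (l m t) = m (l b (b t))) (v : B ⊗[ℂ] X) : b (l U v) = U v := by
  have h1 : ∀ t : B ⊗[ℂ] (B ⊗[ℂ] X), m (l (b ∘ₗ l U) t) = t := by
    intro t
    obtain ⟨t, rfl⟩ := hs t
    rw [l_comp, ← hn, ← hm, L20 m_lU]
  have := h1 (U v)
  rwa [← U_nat, m_U] at this

theorem unit_left {b : ∀ {X : Type u} [AddCommMonoid X] [Module ℂ X],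
    B ⊗[ℂ] (B ⊗[ℂ] X) →ₗ[ℂ] B ⊗[ℂ] (B ⊗[ℂ] X)}
    (hn : ∀ {X Y : Type u} [AddCommMonoid X] [Module ℂ X] [AddCommMonoid Y] [Module ℂ Y]
      (g : X →ₗ[ℂ] Y) (t : B ⊗[ℂ] (B ⊗[ℂ] X)), b (l (l g) t) = l (l g) (b t))
    (hs : ∀ {X : Type u} [AddCommMonoid X] [Module ℂ X], Function.Surjective (b (X := X)))
    (hm : ∀ {X : Type u} [AddCommMonoid X] [Module ℂ X] (t : B ⊗[ℂ] (B ⊗[ℂ] (B ⊗[ℂ] X))),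
      b (m t) = l m (b (l b t))) (v : B ⊗[ℂ] X) : b (U v) = l U v := by
  have h1 : ∀ t : B ⊗[ℂ] (B ⊗[ℂ] X), l m (b (U t)) = t := by
    intro t
    obtain ⟨t, rfl⟩ := hs t
    rw [U_nat, ← hm, m_U]
  have := h1 (l U v)
  rwa [U_nat, hn, L20 m_lU] at this

theorem s_surj : Function.Surjective (s G (X := X)) := fun t => ⟨_, s_si G t⟩

theorem s_lU (v : B ⊗[ℂ] X) : s G (l U v) = U v :=
  unit_right (b := s G) (s_nat0 G) (s_surj G) (s_lm G) v
theorem s_U (v : B ⊗[ℂ] X) : s G (U v) = l U v :=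
  unit_left (b := s G) (s_nat0 G) (s_surj G) (s_m G) v

/-! ### The functional `ε m` and the braiding -/

theorem D1 (t : B ⊗[ℂ] (B ⊗[ℂ] X)) : l ((e G).ev) (s G (l (p G) t)) = E G t := by
  refine stripL G (Y := l (e G).ev ∘ₗ s G ∘ₗ l (p G)) (Z := E G) ?_ t
  intro t
  rw [lE_p, l_comp, l_comp, ← p_nat0]
  have := congrArg (l (E G)) (p_m G t)
  rw [lE_p, ← m_nat0] at this
  rw [this]
  congr 1
  exact (L21 (L21 fun t => (e_def G t).symm) _).symm


/-- Cancellation of a strand on the right. -/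
theorem stripR {Y : ∀ {X : Type u} [AddCommMonoid X] [Module ℂ X], B ⊗[ℂ] (B ⊗[ℂ] X) →ₗ[ℂ] B ⊗[ℂ] X}
    (hn : ∀ {X Y' : Type u} [AddCommMonoid X] [Module ℂ X] [AddCommMonoid Y'] [Module ℂ Y']
      (q : X →ₗ[ℂ] Y') (t : B ⊗[ℂ] (B ⊗[ℂ] X)), Y (l (l q) t) = l q (Y t))
    (t : B ⊗[ℂ] (B ⊗[ℂ] X)) : m (l (k G) (m (Y (l (p G) (l (p G) t))))) = Y t := by
  rw [← m_nat0, m_m, coassoc1, hn, L32 (m_lk_p G), ← hn, lE_p1, m_lU]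

theorem D2 (t : B ⊗[ℂ] (B ⊗[ℂ] X)) : (e G).ev (l (s G) (p G t)) = l (E G) t := by
  have h : ∀ {X : Type u} [AddCommMonoid X] [Module ℂ X] (t : B ⊗[ℂ] (B ⊗[ℂ] X)),
      m ((e G).ev (l (s G) (p G (l (p G) t)))) = m t := by
    intro X _ _ t
    have := congrArg (E G) (p_m G t)
    rw [E_p, ← e_def] at this
    rw [this, Fn_nat0]
  have h1 := stripR G (Y := (e G).ev ∘ₗ l (s G) ∘ₗ p G) (by intros; simp) t
  have h2 := stripR G (Y := l (E G)) (by intros; simp) t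
  simp only [LinearMap.comp_apply] at h1 h2
  rw [h] at h1
  rw [E_p1] at h2
  rw [← h1, ← h2]
theorem L23 {a : Y →ₗ[ℂ] Z} {b : X →ₗ[ℂ] Y} {d : V →ₗ[ℂ] Z} {e : W →ₗ[ℂ] V} {f : X →ₗ[ℂ] W}
    (h : ∀ t, a (b t) = d (e (f t))) (t : B ⊗[ℂ] X) :
    l a (l b t) = l d (l e (l f t)) := by
  simp only [← l_comp]; exact lc h t

theorem E_U1 (v : B ⊗[ℂ] X) : E G (U v) = v := by
  rw [← D1, ← U_nat, s_U, ← l_comp]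
  have : ∀ t : B ⊗[ℂ] X, ((e G).ev ∘ₗ U) t = E G t := by
    intro t
    rw [LinearMap.comp_apply, e_def, m_U]
  rw [lc this, lE_p]

theorem E_U2 (v : B ⊗[ℂ] X) : l (E G) (l U v) = v := by
  have h := E_U1 G v
  rw [E_U] at h
  rw [← l_comp]
  have : E G ∘ₗ U = G.ε 1 • (LinearMap.id : X →ₗ[ℂ] X) := by
    ext x; simp [E_U]
  rw [this]
  simpa [l] using h

/-! ### The operator inverse to the secondary braiding -/

/-- The inverse secondary braiding, -/
def T : B ⊗[ℂ] (B ⊗[ℂ] X) →ₗ[ℂ] B ⊗[ℂ] (B ⊗[ℂ] X) := l (l (E G)) ∘ₗ l (s G) ∘ₗ p G ∘ₗ si G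
/-- The secondary braiding on two strands. -/
def tau : B ⊗[ℂ] (B ⊗[ℂ] X) →ₗ[ℂ] B ⊗[ℂ] (B ⊗[ℂ] X) := l (l (E G)) ∘ₗ l (si G) ∘ₗ p G ∘ₗ s G

theorem T_def (t : B ⊗[ℂ] (B ⊗[ℂ] X)) : T G t = l (l (E G)) (l (s G) (p G (si G t))) := rfl
theorem tau_def (t : B ⊗[ℂ] (B ⊗[ℂ] X)) : tau G t = l (l (E G)) (l (si G) (p G (s G t))) := rfl

theorem T_nat (q : X →ₗ[ℂ] Y) (t : B ⊗[ℂ] (B ⊗[ℂ] X)) : T G (l (l q) t) = l (l q) (T G t) := by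
  simp only [T_def, si_nat0, p_nat0, s_nat1, E_nat2]
theorem tau_nat (q : X →ₗ[ℂ] Y) (t : B ⊗[ℂ] (B ⊗[ℂ] X)) : tau G (l (l q) t) = l (l q) (tau G t) := by
  simp only [tau_def, si_nat1, p_nat0, s_nat0, E_nat2]
@[simp] theorem T_nat0 (G : BQG B) (g : X →ₗ[ℂ] Y) (t : B ⊗[ℂ] (B ⊗[ℂ] X)) :
    (T G) (l (l g) t) = l (l g) (T G t) := T_nat G g t
@[simp] theorem T_nat1 (G : BQG B) (g : X →ₗ[ℂ] Y) (t : B ⊗[ℂ] (B ⊗[ℂ] (B ⊗[ℂ] X))) :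
    (l (T G)) (l (l (l g)) t) = l (l (l g)) (l (T G) t) := L22 (T_nat0 G g) t
@[simp] theorem T_nat2 (G : BQG B) (g : X →ₗ[ℂ] Y) (t : B ⊗[ℂ] (B ⊗[ℂ] (B ⊗[ℂ] (B ⊗[ℂ] X)))) :
    (l (l (T G))) (l (l (l (l g))) t) = l (l (l (l g))) (l (l (T G)) t) := L22 (T_nat1 G g) t
@[simp] theorem tau_nat0 (G : BQG B) (g : X →ₗ[ℂ] Y) (t : B ⊗[ℂ] (B ⊗[ℂ] X)) :
    (tau G) (l (l g) t) = l (l g) (tau G t) := tau_nat G g t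
@[simp] theorem tau_nat1 (G : BQG B) (g : X →ₗ[ℂ] Y) (t : B ⊗[ℂ] (B ⊗[ℂ] (B ⊗[ℂ] X))) :
    (l (tau G)) (l (l (l g)) t) = l (l (l g)) (l (tau G) t) := L22 (tau_nat0 G g) t
@[simp] theorem tau_nat2 (G : BQG B) (g : X →ₗ[ℂ] Y) (t : B ⊗[ℂ] (B ⊗[ℂ] (B ⊗[ℂ] (B ⊗[ℂ] X)))) :
    (l (l (tau G))) (l (l (l (l g))) t) = l (l (l (l g))) (l (l (tau G)) t) := L22 (tau_nat1 G g) t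
@[simp] theorem tau_nat3 (G : BQG B) (g : X →ₗ[ℂ] Y) (t : B ⊗[ℂ] (B ⊗[ℂ] (B ⊗[ℂ] (B ⊗[ℂ] (B ⊗[ℂ] X))))) :
    (l (l (l (tau G)))) (l (l (l (l (l g)))) t) = l (l (l (l (l g)))) (l (l (l (tau G))) t) := L22 (tau_nat2 G g) t

theorem Ti (t : B ⊗[ℂ] (B ⊗[ℂ] X)) : s G (l (p G) (si G t)) = l (T G) (p G t) := by
  have h := congrArg (fun v => l (l (l (E G))) v) (mixed G t)
  rw [← s_nat0, ← p_nat1, ← si_nat0, lE_p1] at h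
  rw [h]
  simp only [← l_comp]
  rfl

theorem T'_eq (t : B ⊗[ℂ] (B ⊗[ℂ] X)) : E G (s G (l (p G) (si G (l (p G) t)))) = l (s G) (p G (si G t)) := by
  rw [mixed, E_nat0, E_nat0, E_nat0, E_p]

theorem T_eq (t : B ⊗[ℂ] (B ⊗[ℂ] X)) : T G t = E G (s G (l (p G) (si G t))) := by
  rw [T_def, ← T'_eq, ← E_nat0, ← s_nat0, ← p_nat1, ← si_nat0, lE_p1]

theorem Tii (t : B ⊗[ℂ] (B ⊗[ℂ] X)) : l (s G) (p G (si G t)) = T G (l (p G) t) := by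
  rw [T_eq, T'_eq]

theorem Ti' (t : B ⊗[ℂ] (B ⊗[ℂ] X)) : s G (l (p G) t) = l (T G) (p G (s G t)) := by
  rw [← Ti, si_s]
theorem Tii' (t : B ⊗[ℂ] (B ⊗[ℂ] X)) : l (s G) (p G t) = T G (l (p G) (s G t)) := by
  rw [← Tii, si_s]

theorem T_s1 (t : B ⊗[ℂ] (B ⊗[ℂ] X)) : T G (s G t) = l (l (E G)) (l (s G) (p G t)) := by
  rw [T_def, si_s]
theorem T_s2 (t : B ⊗[ℂ] (B ⊗[ℂ] X)) : T G (s G t) = E G (s G (l (p G) t)) := by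
  rw [T_eq, si_s]

theorem g_lp (t : B ⊗[ℂ] (B ⊗[ℂ] X)) : (g G).ev (l (p G) t) = l (E G) (s G t) := by
  rw [g_def, ← T_s2, T_s1, E_nat0, E_nat0, E_p]

theorem g_p (t : B ⊗[ℂ] (B ⊗[ℂ] X)) : l ((g G).ev) (p G t) = E G (s G t) := by
  have h : l (E G) (T G (s G t)) = E G (s G t) := by
    rw [T_s2, ← E_nat0, ← s_nat0, lE_p1]
  rw [← h, T_s1]
  simp only [← l_comp]
  apply lc
  intro t
  simp [g_def]

theorem T_s (t : B ⊗[ℂ] (B ⊗[ℂ] X)) : T G (s G t) = R G (g G) t := by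
  rw [T_s1, L22 (fun t => (g_lp G t).symm), R_def, p_nat0]

theorem e_T_s (t : B ⊗[ℂ] (B ⊗[ℂ] X)) : (e G).ev (T G (s G t)) = E G (E G t) := by
  rw [T_s2, ← E_nat0, D1]

theorem Re_Rg (t : B ⊗[ℂ] (B ⊗[ℂ] X)) : R G (e G) (R G (g G) t) = t := by
  apply R_comp_one
  intro X _ _ t
  rw [← T_s, e_T_s]

theorem e_T (t : B ⊗[ℂ] (B ⊗[ℂ] X)) : (e G).ev (T G t) = (f G).ev t := by
  have h := e_T_s G (si G t)
  rwa [s_si] at h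

theorem f_p (t : B ⊗[ℂ] (B ⊗[ℂ] X)) : l ((f G).ev) (p G t) = E G (si G t) := by
  rw [← D1, Ti, L21 (e_T G)]
theorem f_lp (t : B ⊗[ℂ] (B ⊗[ℂ] X)) : (f G).ev (l (p G) t) = l (E G) (si G t) := by
  rw [← D2, Tii, e_T]

theorem tau_s (t : B ⊗[ℂ] (B ⊗[ℂ] X)) : tau G t = R G (f G) (s G t) := by
  rw [tau_def, L22 (fun t => (f_lp G t).symm), R_def, p_nat0]
theorem lE_tau (t : B ⊗[ℂ] (B ⊗[ℂ] X)) : l (E G) (tau G t) = E G t := by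
  rw [tau_def, L22 (E_nat0 G (E G)), L31 (fun t => (f_def G t).symm), f_p, si_s]
theorem E_tau (t : B ⊗[ℂ] (B ⊗[ℂ] X)) : E G (tau G t) = l (E G) t := by
  rw [tau_def, E_nat0, E_nat0, E_p, si_s]
theorem tau_eq (t : B ⊗[ℂ] (B ⊗[ℂ] X)) : tau G t = E G (si G (l (p G) (s G t))) := by
  rw [← f_p, tau_s, R_def]

/-! ### Pentagons -/

/-- Auxiliary. -/
def Q : B ⊗[ℂ] (B ⊗[ℂ] X) →ₗ[ℂ] B ⊗[ℂ] (B ⊗[ℂ] X) := s G ∘ₗ R G (e G)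
theorem Q_def (t : B ⊗[ℂ] (B ⊗[ℂ] X)) : Q G t = s G (R G (e G) t) := rfl
@[simp] theorem Q_nat0 (q : X →ₗ[ℂ] Y) (t : B ⊗[ℂ] (B ⊗[ℂ] X)) : Q G (l (l q) t) = l (l q) (Q G t) := by
  simp [Q_def]
theorem Q_T (t : B ⊗[ℂ] (B ⊗[ℂ] X)) : Q G (T G t) = t := by
  have h := Re_Rg G (si G t)
  rw [← T_s, s_si] at h
  rw [Q_def, h, s_si]

theorem p_s' (t : B ⊗[ℂ] (B ⊗[ℂ] X)) : p G (s G t) = l (Q G) (s G (l (p G) t)) := by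
  rw [Ti', L20 (Q_T G)]
theorem lp_s' (t : B ⊗[ℂ] (B ⊗[ℂ] X)) : l (p G) (s G t) = Q G (l (s G) (p G t)) := by
  rw [Tii', Q_T]

theorem si_Q (t : B ⊗[ℂ] (B ⊗[ℂ] X)) : si G (Q G t) = R G (e G) t := by rw [Q_def, si_s]

theorem U'_eq (t : B ⊗[ℂ] (B ⊗[ℂ] X)) : l (si G) (p G (s G t)) = l (R G (e G)) (s G (l (p G) t)) := by
  rw [p_s', L21 (si_Q G)]
theorem V_eq (t : B ⊗[ℂ] (B ⊗[ℂ] X)) : si G (l (p G) (s G t)) = R G (e G) (l (s G) (p G t)) := by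
  rw [lp_s', si_Q]

theorem P1' (t : B ⊗[ℂ] (B ⊗[ℂ] X)) : l (si G) (p G (s G t)) = tau G (l (p G) t) := by
  have h : l (l (p G)) (l (si G) (p G (s G t))) = l (si G) (p G (s G (l (p G) t))) := by
    rw [U'_eq, U'_eq, coassoc1, s_nat0, L22 (lp_R G (e G))]
  rw [tau_def, ← h, E_p2]
theorem P1 (t : B ⊗[ℂ] (B ⊗[ℂ] X)) : p G (s G t) = l (s G) (tau G (l (p G) t)) := by
  rw [← P1', s_si1]
theorem P2' (t : B ⊗[ℂ] (B ⊗[ℂ] X)) : si G (l (p G) (s G t)) = l (tau G) (p G t) := by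
  have h : p G (si G (l (p G) (s G t))) = l (si G) (l (l (p G)) (l (s G) (p G t))) := by
    rw [V_eq, p_R, p_nat0, coassoc, L33 (fun t => V_eq G t)]
  have h2 : l (tau G) (p G t) = l (E G) (l (si G) (l (l (p G)) (l (s G) (p G t)))) := by
    simp only [← l_comp]; exact lc (tau_eq G) _
  rw [h2, ← h, lE_p]
theorem P2 (t : B ⊗[ℂ] (B ⊗[ℂ] X)) : l (p G) (s G t) = s G (l (tau G) (p G t)) := by
  rw [← P2', s_si]


theorem ls_p (t : B ⊗[ℂ] (B ⊗[ℂ] X)) : l (s G) (p G t) = R G (g G) (l (tau G) (p G t)) := by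
  rw [Tii', P2, T_s]

theorem lm_S (t : B ⊗[ℂ] (B ⊗[ℂ] X)) : l m (s G (l (s G) (l (k G) (p G t)))) = l U (E G t) := by
  rw [← s_m, m_lk_p, s_U]

theorem Rg_Y (t : B ⊗[ℂ] (B ⊗[ℂ] X)) : R G (g G) (l (l m) (l (tau G) (p G (l (s G) (l (k G) (p G t)))))) = l (l U) t := by
  rw [R_nat0, ← ls_p, p_nat0, p_nat0, coassoc]
  have h : l (l m) (l (s G) (l (l (s G)) (l (l (k G)) (l (p G) (p G t))))) = l (l U) (l (E G) (p G t)) := by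
    simp only [← l_comp]; exact lc (lm_S G) _
  rw [h, lE_p]

theorem Rg_surj (t : B ⊗[ℂ] (B ⊗[ℂ] X)) : ∃ v, R G (g G) v = t := by
  have h := congrArg (l (l (E G))) (Rg_Y G t)
  rw [L20 (E_U2 G), ← R_nat0] at h
  exact ⟨_, h⟩

theorem Rg_Re (t : B ⊗[ℂ] (B ⊗[ℂ] X)) : R G (g G) (R G (e G) t) = t := by
  obtain ⟨v, rfl⟩ := Rg_surj G t
  rw [Re_Rg]

theorem tau_eq_Q (t : B ⊗[ℂ] (B ⊗[ℂ] X)) : tau G t = Q G t := by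
  rw [tau_eq, V_eq, R_def, E_nat0, E_p, L23 (p_s' G), Fn_nat0, ← p_nat0, D2, E_p1]

theorem tau_T (t : B ⊗[ℂ] (B ⊗[ℂ] X)) : tau G (T G t) = t := by rw [tau_eq_Q, Q_T]
theorem T_tau (t : B ⊗[ℂ] (B ⊗[ℂ] X)) : T G (tau G t) = t := by rw [tau_eq_Q, Q_def, T_s, Rg_Re]
theorem tau_T1 (t : B ⊗[ℂ] (B ⊗[ℂ] (B ⊗[ℂ] X))) : l (tau G) (l (T G) t) = t := L20 (tau_T G) t
theorem T_tau1 (t : B ⊗[ℂ] (B ⊗[ℂ] (B ⊗[ℂ] X))) : l (T G) (l (tau G) t) = t := L20 (T_tau G) t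
theorem tau_Re (t : B ⊗[ℂ] (B ⊗[ℂ] X)) : tau G t = s G (R G (e G) t) := by rw [tau_eq_Q, Q_def]
theorem si_tau (t : B ⊗[ℂ] (B ⊗[ℂ] X)) : si G (tau G t) = R G (e G) t := by rw [tau_Re, si_s]
theorem p_s (t : B ⊗[ℂ] (B ⊗[ℂ] X)) : p G (s G t) = l (tau G) (s G (l (p G) t)) := by
  rw [p_s', lc (tau_eq_Q G)]
theorem lp_s (t : B ⊗[ℂ] (B ⊗[ℂ] X)) : l (p G) (s G t) = tau G (l (s G) (p G t)) := by
  rw [lp_s', tau_eq_Q]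

/-! ### Commutation relations -/

/-- `σ τ⁻¹` -/
def N : B ⊗[ℂ] (B ⊗[ℂ] X) →ₗ[ℂ] B ⊗[ℂ] (B ⊗[ℂ] X) := s G ∘ₗ T G
theorem N_def (t : B ⊗[ℂ] (B ⊗[ℂ] X)) : N G t = s G (T G t) := rfl
theorem N_Rf (t : B ⊗[ℂ] (B ⊗[ℂ] X)) : N G (R G (f G) t) = t := by
  obtain ⟨v, rfl⟩ := s_surj G t
  rw [← tau_s, N_def, T_tau]
theorem Rf_N (t : B ⊗[ℂ] (B ⊗[ℂ] X)) : R G (f G) (N G t) = t := by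
  rw [N_def, ← tau_s, tau_T]
theorem N_tau (t : B ⊗[ℂ] (B ⊗[ℂ] X)) : N G (tau G t) = s G t := by
  rw [N_def, T_tau]

theorem N_lR (a : Fn B) (t : B ⊗[ℂ] (B ⊗[ℂ] (B ⊗[ℂ] X))) : N G (l (R G a) t) = l (R G a) (N G t) := by
  conv_lhs => rw [← Rf_N G t, ← R_comm, N_Rf]
theorem R_lN (a : Fn B) (t : B ⊗[ℂ] (B ⊗[ℂ] (B ⊗[ℂ] X))) : R G a (l (N G) t) = l (N G) (R G a t) := by
  conv_rhs => rw [← L20 (Rf_N G) t, R_comm, L20 (N_Rf G)]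
theorem N_lN (t : B ⊗[ℂ] (B ⊗[ℂ] (B ⊗[ℂ] X))) : N G (l (N G) t) = l (N G) (N G t) := by
  conv_rhs => rw [← L20 (Rf_N G) t, N_lR, L20 (N_Rf G)]

theorem p_tau (t : B ⊗[ℂ] (B ⊗[ℂ] X)) : p G (tau G t) = l (tau G) (tau G (l (p G) t)) := by
  rw [tau_s, p_R, P1, L21 (fun t => (tau_s G t).symm)]
theorem lp_tau (t : B ⊗[ℂ] (B ⊗[ℂ] X)) : l (p G) (tau G t) = tau G (l (tau G) (p G t)) := by
  rw [tau_s, lp_R, P2, ← tau_s]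
/-! ### The secondary braiding and multiplication -/

theorem T_surj_v (t : B ⊗[ℂ] (B ⊗[ℂ] (B ⊗[ℂ] X))) : ∃ v, l (s G) (s G v) = t :=
  ⟨si G (l (si G) t), by rw [s_si, s_si1]⟩
theorem T_surj_v' (t : B ⊗[ℂ] (B ⊗[ℂ] (B ⊗[ℂ] X))) : ∃ v, s G (l (s G) v) = t :=
  ⟨l (si G) (si G t), by rw [s_si1, s_si]⟩

theorem Rg_T (t : B ⊗[ℂ] (B ⊗[ℂ] X)) : R G (g G) (T G t) = T G (N G t) := by
  rw [← T_s, N_def]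

theorem Rg_F (t : B ⊗[ℂ] (B ⊗[ℂ] X)) : R G (g G) t = l (l (E G)) (l (s G) (p G t)) := by
  rw [← T_s, T_s1]
theorem Rg_E (t : B ⊗[ℂ] (B ⊗[ℂ] X)) : R G (g G) t = E G (s G (l (p G) t)) := by
  rw [← T_s, T_s2]

theorem ltau_p (t : B ⊗[ℂ] (B ⊗[ℂ] X)) : l (tau G) (p G t) = T G (l (p G) (tau G t)) := by
  rw [lp_tau, T_tau]

theorem T_m (t : B ⊗[ℂ] (B ⊗[ℂ] (B ⊗[ℂ] X))) : T G (m t) = l m (T G (l (T G) t)) := by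
  obtain ⟨t, rfl⟩ := T_surj_v G t
  rw [← s_lm, T_s, Rg_F, p_nat0, L23 (s_lm G), ← m_nat1, ls_p, ← R_nat0, ← R_nat0, ltau_p,
    ← T_nat0, ← T_nat0]
  have h : l (l (l (E G))) (l (l (s G)) (l (p G) (tau G t))) = l (R G (g G)) (tau G t) := by
    simp only [← l_comp]; exact lc (fun t => (Rg_F G t).symm) _
  rw [h, Rg_T, N_lR, N_tau, L21 (T_s G)]

theorem s_lp_Rg (t : B ⊗[ℂ] (B ⊗[ℂ] X)) : s G (l (p G) t) = l (R G (g G)) (tau G (l (p G) t)) := by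
  rw [Ti', P1, L21 (T_s G)]

theorem T_lm (t : B ⊗[ℂ] (B ⊗[ℂ] (B ⊗[ℂ] X))) : T G (l m t) = m (l (T G) (T G t)) := by
  obtain ⟨t, rfl⟩ := T_surj_v' G t
  have h1 : E G (s G (l (tau G) (l (l (p G)) t))) = l (T G) (R G (g G) (l (tau G) t)) := by
    rw [Rg_E G (l (tau G) t), L23 (p_tau G), s_nat0, E_nat0, T_tau1]
  rw [← s_m, T_s, Rg_E, ← m_nat0, s_m, E_nat0, L23 (s_lp_Rg G), s_nat0, E_nat0, h1,
    L22 (Rg_T G), ← R_lN, L21 (N_tau G), T_s]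

theorem tau_lm (t : B ⊗[ℂ] (B ⊗[ℂ] (B ⊗[ℂ] X))) : tau G (l m t) = m (l (tau G) (tau G t)) := by
  have h := T_m G (l (tau G) (tau G t))
  rw [T_tau1, T_tau] at h
  rw [← h, tau_T]

theorem tau_m (t : B ⊗[ℂ] (B ⊗[ℂ] (B ⊗[ℂ] X))) : tau G (m t) = l m (tau G (l (tau G) t)) := by
  have h := T_lm G (tau G (l (tau G) t))
  rw [T_tau, T_tau1] at h
  rw [← h, tau_T]

theorem e_tt (t : B ⊗[ℂ] (B ⊗[ℂ] (B ⊗[ℂ] X))) : (e G).ev (l (tau G) (tau G t)) = l ((e G).ev) t := by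
  rw [e_def, ← tau_lm, E_tau]
  exact L21 (fun _ => rfl) t
theorem le_tt (t : B ⊗[ℂ] (B ⊗[ℂ] (B ⊗[ℂ] X))) : l ((e G).ev) (tau G (l (tau G) t)) = (e G).ev t := by
  have h : ∀ t : B ⊗[ℂ] (B ⊗[ℂ] (B ⊗[ℂ] X)), l ((e G).ev) t = l (E G) (l m t) :=
    fun t => (L21 (fun _ => rfl) t).symm
  rw [h, ← tau_m, lE_tau, e_def]

theorem J1 (t : B ⊗[ℂ] (B ⊗[ℂ] (B ⊗[ℂ] X))) : R G (e G) (l (tau G) (tau G t)) = l (tau G) (tau G (l (R G (e G)) t)) := by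
  have h : l (R G (e G)) t = l (l ((e G).ev)) (l (p G) (l (l (p G)) t)) := by
    simp only [← l_comp]; rfl
  rw [R_def, L23 (p_tau G), ← tau_nat0, p_nat0, p_nat0, p_tau, Fn_nat1, L31 (e_tt G), h, tau_nat0]
theorem J2 (t : B ⊗[ℂ] (B ⊗[ℂ] (B ⊗[ℂ] X))) : l (R G (e G)) (tau G (l (tau G) t)) = tau G (l (tau G) (R G (e G) t)) := by
  have h : ∀ t : B ⊗[ℂ] (B ⊗[ℂ] (B ⊗[ℂ] X)), l (R G (e G)) t = l (l ((e G).ev)) (l (p G) (l (l (p G)) t)) := by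
    intro t; simp only [← l_comp]; rfl
  rw [h, ← tau_nat0, L23 (lp_tau G), lp_tau, p_nat0, p_nat0, ← tau_nat0, L31 (le_tt G), Fn_nat1,
    R_def]

theorem tau_surj : Function.Surjective (tau G (X := X)) := fun t => ⟨_, tau_T G t⟩

theorem tau_lU (v : B ⊗[ℂ] X) : tau G (l U v) = U v :=
  unit_right (b := tau G) (tau_nat0 G) (tau_surj G) (tau_lm G) v

theorem tau_lk (t : B ⊗[ℂ] (B ⊗[ℂ] X)) : tau G (l (k G) t) = k G (tau G t) := by
  have h1 : ∀ {X : Type u} [AddCommMonoid X] [Module ℂ X] (t : B ⊗[ℂ] (B ⊗[ℂ] X)),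
      m (l (tau G) (k G (tau G (l (p G) t)))) = U (l (E G) t) := by
    intro X _ _ t
    rw [← k_nat0, ← p_tau, m_k_p, E_tau]
  have h2 : ∀ {X : Type u} [AddCommMonoid X] [Module ℂ X] (t : B ⊗[ℂ] (B ⊗[ℂ] X)),
      m (l (tau G) (l (l (k G)) (tau G (l (p G) t)))) = U (l (E G) t) := by
    intro X _ _ t
    rw [← tau_nat0, ← tau_lm, L32 (m_lk_p G), tau_lU]
  have h3 : tau G (l (k G) t) = m (l (tau G) (l (l (k G)) (m (l (tau G) (k G (tau G (l (p G) (l (p G) t)))))))) := by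
    rw [h1, E_p1, ← U_nat, ← U_nat, m_U]
  have h4 : ∀ v : B ⊗[ℂ] (B ⊗[ℂ] (B ⊗[ℂ] X)), l m (l (l (tau G)) (l (l (l (k G))) (l (tau G) (l (l (p G)) v)))) = l U (l (l (E G)) v) := by
    intro v
    simp only [← l_comp]; exact lc h2 _
  rw [h3, coassoc1, tau_nat0, k_nat0, ← m_nat0, ← m_nat0, m_m, h4, m_lU, ← k_nat0, ← tau_nat0,
    lE_p1]

/-! ### The main lemma -/

/-- `(id ⊗ m)(σ ⊗ id)(id ⊗ φ)` -/
def psi : B ⊗[ℂ] (B ⊗[ℂ] X) →ₗ[ℂ] B ⊗[ℂ] (B ⊗[ℂ] X) := l m ∘ₗ s G ∘ₗ l (p G)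
theorem psi_def (t : B ⊗[ℂ] (B ⊗[ℂ] X)) : psi G t = l m (s G (l (p G) t)) := rfl
theorem psi_nat0 (q : X →ₗ[ℂ] Y) (t : B ⊗[ℂ] (B ⊗[ℂ] X)) : psi G (l (l q) t) = l (l q) (psi G t) := by
  simp [psi_def]
theorem s_psi (t : B ⊗[ℂ] (B ⊗[ℂ] X)) : l m (l (l (k G)) (psi G (l (p G) t))) = s G t := by
  rw [psi_def, ← m_nat1, L22 m_m, coassoc1, s_nat0]
  have : ∀ v : B ⊗[ℂ] (B ⊗[ℂ] (B ⊗[ℂ] X)), l (l m) (l (l (l (k G))) (l (l (p G)) v)) = l (l U) (l (l (E G)) v) := L32 (L32 (m_lk_p G))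
  rw [this, L20 m_lU, ← s_nat0, lE_p1]

section
variable {al : ∀ {X : Type u} [AddCommMonoid X] [Module ℂ X],
    B ⊗[ℂ] (B ⊗[ℂ] X) →ₗ[ℂ] B ⊗[ℂ] (B ⊗[ℂ] X)}

theorem main_aux
    (hn : ∀ {X Y : Type u} [AddCommMonoid X] [Module ℂ X] [AddCommMonoid Y] [Module ℂ Y]
      (q : X →ₗ[ℂ] Y) (t : B ⊗[ℂ] (B ⊗[ℂ] X)), al (l (l q) t) = l (l q) (al t))
    (hm : ∀ {X : Type u} [AddCommMonoid X] [Module ℂ X] (t : B ⊗[ℂ] (B ⊗[ℂ] (B ⊗[ℂ] X))),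
      al (l m t) = m (l al (al t)))
    (hp : ∀ {X : Type u} [AddCommMonoid X] [Module ℂ X] (t : B ⊗[ℂ] (B ⊗[ℂ] X)),
      p G (al t) = l (tau G) (al (l (p G) t)))
    (t : B ⊗[ℂ] (B ⊗[ℂ] (B ⊗[ℂ] X))) :
    m (l (l m) (l (l (l (tau G))) (l (s G) (l (l al) (l (tau G) (l (l (l (p G))) (al (l (p G) t)))))))) = m (l (l m) (l (l (l (tau G))) (l (l (tau G)) (l al (l (l (s G)) (l (l (l (p G))) (al (l (p G) t)))))))) := by
  have hn1 : ∀ {X Y : Type u} [AddCommMonoid X] [Module ℂ X] [AddCommMonoid Y] [Module ℂ Y]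
      (q : X →ₗ[ℂ] Y) (t : B ⊗[ℂ] (B ⊗[ℂ] (B ⊗[ℂ] X))), l al (l (l (l q)) t) = l (l (l q)) (l al t) :=
    fun q t => L22 (hn q) t
  have h1 : p G (al (l m t)) = m (l (l m) (l (l (l (tau G))) (l (s G) (l (l al) (l (tau G) (l (l (l (p G))) (al (l (p G) t)))))))) := by
    rw [hm, p_m, L23 hp, ← hn, p_nat0, p_nat0, hp, s_nat1, p_nat1, hn]
  have h2 : p G (al (l m t)) = m (l (l m) (l (l (l (tau G))) (l (l (tau G)) (l al (l (l (s G)) (l (l (l (p G))) (al (l (p G) t)))))))) := by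
    have : l (p G) (l m t) = l m (l (l (l m)) (l (l (s G)) (l (p G) (l (l (p G)) t)))) := by
      simp only [← l_comp]; exact lc (p_m G) _
    rw [hp, this, hm, hn, hn1, m_nat0, L23 (tau_lm G), ← m_nat0, ← m_nat0, ← m_nat0, hn, p_nat1, hn]
  rw [← h1, h2]

theorem main_psi
    (hn : ∀ {X Y : Type u} [AddCommMonoid X] [Module ℂ X] [AddCommMonoid Y] [Module ℂ Y]
      (q : X →ₗ[ℂ] Y) (t : B ⊗[ℂ] (B ⊗[ℂ] X)), al (l (l q) t) = l (l q) (al t))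
    (hs : ∀ {X : Type u} [AddCommMonoid X] [Module ℂ X], Function.Surjective (al (X := X)))
    (hm : ∀ {X : Type u} [AddCommMonoid X] [Module ℂ X] (t : B ⊗[ℂ] (B ⊗[ℂ] (B ⊗[ℂ] X))),
      al (l m t) = m (l al (al t)))
    (hp : ∀ {X : Type u} [AddCommMonoid X] [Module ℂ X] (t : B ⊗[ℂ] (B ⊗[ℂ] X)),
      p G (al t) = l (tau G) (al (l (p G) t)))
    (t : B ⊗[ℂ] (B ⊗[ℂ] (B ⊗[ℂ] X))) :
    psi G (l al (tau G t)) = l (tau G) (al (l (psi G) t)) := by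
  have hp' : ∀ {X : Type u} [AddCommMonoid X] [Module ℂ X] (t : B ⊗[ℂ] (B ⊗[ℂ] X)),
      al (l (p G) t) = l (T G) (p G (al t)) := by
    intro X _ _ t; rw [hp, T_tau1]
  have key : ∀ t : B ⊗[ℂ] (B ⊗[ℂ] (B ⊗[ℂ] X)),
      l m (l (l (tau G)) (s G (l al (tau G (l (l (p G)) t))))) = l m (l (l (tau G)) (l (tau G) (al (l (s G) (l (l (p G)) t))))) := by
    intro t
    have h := stripL G (Y := l m ∘ₗ l (l (tau G)) ∘ₗ s G ∘ₗ l al ∘ₗ tau G ∘ₗ l (l (p G)) ∘ₗ T G)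
      (Z := l m ∘ₗ l (l (tau G)) ∘ₗ l (tau G) ∘ₗ al ∘ₗ l (s G) ∘ₗ l (l (p G)) ∘ₗ T G) ?_ (tau G t)
    · simp only [LinearMap.comp_apply, T_tau] at h
      exact h
    · intro v
      obtain ⟨v, rfl⟩ := hs v
      simp only [l_comp]
      rw [← hp']
      exact main_aux G hn hm hp v
  have h1 : l m (l (l (tau G)) (s G (l al (tau G (l (l (p G)) t))))) = psi G (l al (tau G t)) := by
    rw [tau_nat0, L23 hp', s_nat0, L20 (tau_T1 G), psi_def]
  have h2 : l m (l (l (tau G)) (l (tau G) (al (l (s G) (l (l (p G)) t))))) = l (tau G) (al (l (psi G) t)) := by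
    have : l (psi G) t = l (l m) (l (s G) (l (l (p G)) t)) := by
      simp only [← l_comp]; rfl
    rw [this, hn, L23 (tau_lm G)]
  rw [← h1, key, h2]

theorem main_braid
    (hn : ∀ {X Y : Type u} [AddCommMonoid X] [Module ℂ X] [AddCommMonoid Y] [Module ℂ Y]
      (q : X →ₗ[ℂ] Y) (t : B ⊗[ℂ] (B ⊗[ℂ] X)), al (l (l q) t) = l (l q) (al t))
    (hs : ∀ {X : Type u} [AddCommMonoid X] [Module ℂ X], Function.Surjective (al (X := X)))
    (hm : ∀ {X : Type u} [AddCommMonoid X] [Module ℂ X] (t : B ⊗[ℂ] (B ⊗[ℂ] (B ⊗[ℂ] X))),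
      al (l m t) = m (l al (al t)))
    (hp : ∀ {X : Type u} [AddCommMonoid X] [Module ℂ X] (t : B ⊗[ℂ] (B ⊗[ℂ] X)),
      p G (al t) = l (tau G) (al (l (p G) t)))
    (t : B ⊗[ℂ] (B ⊗[ℂ] (B ⊗[ℂ] X))) :
    s G (l al (tau G t)) = l (tau G) (al (l (s G) t)) := by
  have h0 : l (s G) t = l (l m) (l (l (l (k G))) (l (psi G) (l (l (p G)) t))) := by
    simp only [← l_comp]; exact lc (fun t => (s_psi G t).symm) _
  have h1 : ∀ v : B ⊗[ℂ] (B ⊗[ℂ] (B ⊗[ℂ] (B ⊗[ℂ] X))), l (l (tau G)) (l (l (l (k G))) v) = l (l (k G)) (l (l (tau G)) v) :=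
    L22 (L22 (tau_lk G))
  rw [h0, hn, L23 (tau_lm G), hn, tau_nat1, h1, ← main_psi G hn hs hm hp, ← psi_nat0, tau_nat0,
    L32 (fun t => (hp t).symm), s_psi]
end

theorem H7 (t : B ⊗[ℂ] (B ⊗[ℂ] (B ⊗[ℂ] X))) : s G (l (tau G) (tau G t)) = l (tau G) (tau G (l (s G) t)) :=
  main_braid G (al := tau G) (tau_nat0 G) (tau_surj G) (tau_lm G) (p_tau G) t
theorem H4 (t : B ⊗[ℂ] (B ⊗[ℂ] (B ⊗[ℂ] X))) : s G (l (s G) (tau G t)) = l (tau G) (s G (l (s G) t)) :=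
  main_braid G (al := s G) (s_nat0 G) (s_surj G) (s_lm G) (p_s G) t
/-! ### Group-theoretic part -/

theorem group_part {H : Type*} [Group H] {s1 s2 t1 t2 : H}
    (h7 : s1 * (t2 * t1) = t2 * (t1 * s2)) (h4 : s1 * (s2 * t1) = t2 * (s1 * s2))
    (j1 : s1⁻¹ * t1 * (t2 * t1) = t2 * (t1 * (s2⁻¹ * t2)))
    (j2 : s2⁻¹ * t2 * (t1 * t2) = t1 * (t2 * (s1⁻¹ * t1)))
    (c1 : s1 * t1⁻¹ * (s2 * t2⁻¹) = s2 * t2⁻¹ * (s1 * t1⁻¹))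
    (c2 : t1⁻¹ * s1 * (s2 * t2⁻¹) = s2 * t2⁻¹ * (t1⁻¹ * s1))
    (c3 : s1 * t1⁻¹ * (t2⁻¹ * s2) = t2⁻¹ * s2 * (s1 * t1⁻¹)) :
    s1 * (s2 * s1) = s2 * (s1 * s2) ∧ t1 * (s2 * s1) = s2 * (s1 * t2) ∧
    s1 * (t2 * s1) = s2 * (t1 * s2) ∧ s1 * (s2 * t1) = t2 * (s1 * s2) ∧
    t1 * (t2 * s1) = s2 * (t1 * t2) ∧ t1 * (s2 * t1) = t2 * (s1 * t2) ∧
    s1 * (t2 * t1) = t2 * (t1 * s2) ∧ t1 * (t2 * t1) = t2 * (t1 * t2) := by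
  have e8 : t1 * (t2 * t1) = t2 * (t1 * t2) := by
    have h := congrArg (fun x => s1 * x) j1
    simp only [← mul_assoc] at h h7 ⊢
    rw [mul_inv_cancel, one_mul, h7] at h
    simpa [mul_assoc] using h
  have e5 : t1 * (t2 * s1) = s2 * (t1 * t2) := by
    have h := congrArg (fun x => s2 * x) j2
    simp only [mul_assoc, mul_inv_cancel_left] at h
    apply mul_right_cancel (b := s1⁻¹ * t1)
    simp only [mul_assoc, mul_inv_cancel_left]
    rw [e8, h]
  obtain ⟨n1, rfl⟩ : ∃ n1, s1 = n1 * t1 := ⟨s1 * t1⁻¹, by simp⟩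
  obtain ⟨n2, rfl⟩ : ∃ n2, s2 = n2 * t2 := ⟨s2 * t2⁻¹, by simp⟩
  simp only [mul_assoc, mul_inv_cancel, mul_one] at *
  clear j1 j2

  have a1 : t1 * n2 * t1⁻¹ = t2⁻¹ * n1 * t2 := by
    have : n1 * (t2 * (t1 * t2)) = t2 * (t1 * (n2 * t2)) := by rw [← e8, h7]
    have : t2⁻¹ * (n1 * (t2 * (t1 * t2))) = t1 * (n2 * t2) := by rw [this]; simp
    rw [mul_inv_eq_iff_eq_mul]
    apply mul_right_cancel (b := t2)
    simp only [mul_assoc, this]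
  have a2 : t1⁻¹ * n2 * t1 = t2 * n1 * t2⁻¹ := by
    have h : t1 * (t2 * (n1 * t1)) = n2 * (t1 * (t2 * t1)) := by rw [e8, e5]
    have h : t2 * (n1 * t1) = t1⁻¹ * (n2 * (t1 * (t2 * t1))) := by rw [← h]; simp
    rw [eq_mul_inv_iff_mul_eq]
    apply mul_right_cancel (b := t1)
    simp only [mul_assoc, h]
  obtain ⟨c, hc⟩ : ∃ c, c = t1 * n2 * t1⁻¹ := ⟨_, rfl⟩
  obtain ⟨d, hd⟩ : ∃ d, d = t1⁻¹ * n2 * t1 := ⟨_, rfl⟩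
  have b1 : c * n1 = n1 * c := by
    have h := congrArg (fun x => t1 * x * t1⁻¹) c2
    simp only [mul_assoc, mul_inv_cancel_left, mul_inv_cancel, mul_one] at h
    simp only [hc, mul_assoc, h]
  have b2 : d * n2 = n2 * d := by
    have h := congrArg (fun x => t2 * x * t2⁻¹) c3
    simp only [mul_assoc, mul_inv_cancel_left, mul_inv_cancel, mul_one] at h
    simp only [hd, a2, mul_assoc, h]
  have r1 : ∀ x, t1 * (n2 * x) = c * (t1 * x) := by intro x; simp [hc, mul_assoc]
  have r2 : ∀ x, t2 * (c * x) = n1 * (t2 * x) := by intro x; rw [hc, a1]; simp [mul_assoc]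
  have r3 : ∀ x, t1 * (d * x) = n2 * (t1 * x) := by intro x; simp [hd, mul_assoc]
  have r4 : ∀ x, t2 * (n1 * x) = d * (t2 * x) := by intro x; rw [hd, a2]; simp [mul_assoc]
  have cd : c = d := by
    rw [r1, r4, r1, r2, e8] at h4
    simp only [← mul_assoc] at h4
    have h4 := mul_right_cancel (mul_right_cancel (mul_right_cancel h4))
    rw [← b1] at h4
    exact mul_right_cancel h4
  subst cd
  have b1' : ∀ x, c * (n1 * x) = n1 * (c * x) := by intro x; rw [← mul_assoc, b1, mul_assoc]
  have b2' : ∀ x, c * (n2 * x) = n2 * (c * x) := by intro x; rw [← mul_assoc, b2, mul_assoc]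
  have c1' : ∀ x, n1 * (n2 * x) = n2 * (n1 * x) := by intro x; rw [← mul_assoc, c1, mul_assoc]
  refine ⟨?_, ?_, ?_, h4, e5, ?_, h7, e8⟩
  · simp only [r1, r2, r3, r4, b1', b2', c1', e8]
  · simp only [r1, r3, r4, b2', e8]
  · simp only [r1, r2, r3, r4, c1', e8]
  · simp only [r1, r4, e8]

/-! ### Transfer to plain tensor powers -/

theorem i_E3 (t : T3 B ⊗[ℂ] X) : l (l (E G)) (c3 t) = c2 (G.ε3r.rTensor X t) := by
  have : l (l (E G)) ∘ₗ c3 = c2 ∘ₗ G.ε3r.rTensor X := by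
    ext a b c x
    change a ⊗ₜ[ℂ] (b ⊗ₜ[ℂ] (G.ε c • x)) = a ⊗ₜ[ℂ] ((G.ε c • b) ⊗ₜ[ℂ] x)
    rw [TensorProduct.smul_tmul]
  exact LinearMap.congr_fun this t

theorem h22_tau (t : B ⊗[ℂ] (B ⊗[ℂ] X)) : h22 G.τ t = tau G t := by
  obtain ⟨v, rfl⟩ := c2_surj t
  rw [tau_def]
  simp only [s, si, p, i2_h22, i_p1, i3_op23, i_E3]
  simp only [← LinearMap.rTensor_comp_apply]
  rfl

theorem faithful {f g : T3 B →ₗ[ℂ] T3 B}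
    (h : ∀ v : T3 B ⊗[ℂ] (ULift.{u} ℂ), c3 (f.rTensor _ v) = c3 (g.rTensor _ v)) : f = g := by
  have c3_inj : Function.Injective (c3 (B := B) (X := ULift.{u} ℂ)) := by
    intro x y hxy
    have h2 : Function.Injective (l (B := B) (c2 (B := B) (X := ULift.{u} ℂ))) := by
      intro x y hxy
      have := congrArg (l (B := B) (TensorProduct.assoc ℂ B B (ULift.{u} ℂ)).symm.toLinearMap) hxy
      have hc : ∀ t : T2 B ⊗[ℂ] ULift.{u} ℂ,
          (TensorProduct.assoc ℂ B B (ULift.{u} ℂ)).symm.toLinearMap (c2 t) = t :=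
        fun t => (TensorProduct.assoc ℂ B B (ULift.{u} ℂ)).symm_apply_apply t
      rwa [L20 hc, L20 hc] at this
    exact (TensorProduct.assoc ℂ B (T2 B) (ULift.{u} ℂ)).injective (h2 hxy)
  apply LinearMap.ext
  intro w
  have h1 := c3_inj (h (w ⊗ₜ[ℂ] ULift.up 1))
  rw [LinearMap.rTensor_tmul, LinearMap.rTensor_tmul] at h1
  have h2 := congrArg (fun v => TensorProduct.rid ℂ (T3 B)
    ((ULift.moduleEquiv (R := ℂ) (M := ℂ)).toLinearMap.lTensor (T3 B) v)) h1
  simpa using h2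

theorem lN_def (t : B ⊗[ℂ] (B ⊗[ℂ] (B ⊗[ℂ] X))) : l (N G) t = l (s G) (l (T G) t) :=
  l_comp _ _ t

theorem group_gen :
    (∀ t : B ⊗[ℂ] (B ⊗[ℂ] (B ⊗[ℂ] X)), s G (l (s G) (s G t)) = l (s G) (s G (l (s G) t))) ∧
    (∀ t : B ⊗[ℂ] (B ⊗[ℂ] (B ⊗[ℂ] X)), tau G (l (s G) (s G t)) = l (s G) (s G (l (tau G) t))) ∧
    (∀ t : B ⊗[ℂ] (B ⊗[ℂ] (B ⊗[ℂ] X)), s G (l (tau G) (s G t)) = l (s G) (tau G (l (s G) t))) ∧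
    (∀ t : B ⊗[ℂ] (B ⊗[ℂ] (B ⊗[ℂ] X)), s G (l (s G) (tau G t)) = l (tau G) (s G (l (s G) t))) ∧
    (∀ t : B ⊗[ℂ] (B ⊗[ℂ] (B ⊗[ℂ] X)), tau G (l (tau G) (s G t)) = l (s G) (tau G (l (tau G) t))) ∧
    (∀ t : B ⊗[ℂ] (B ⊗[ℂ] (B ⊗[ℂ] X)), tau G (l (s G) (tau G t)) = l (tau G) (s G (l (tau G) t))) ∧
    (∀ t : B ⊗[ℂ] (B ⊗[ℂ] (B ⊗[ℂ] X)), s G (l (tau G) (tau G t)) = l (tau G) (tau G (l (s G) t))) ∧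
    (∀ t : B ⊗[ℂ] (B ⊗[ℂ] (B ⊗[ℂ] X)), tau G (l (tau G) (tau G t)) = l (tau G) (tau G (l (tau G) t))) := by
  let s1 : Equiv.Perm (B ⊗[ℂ] (B ⊗[ℂ] (B ⊗[ℂ] X))) := ⟨s G, si G, si_s G, s_si G⟩
  let s2 : Equiv.Perm (B ⊗[ℂ] (B ⊗[ℂ] (B ⊗[ℂ] X))) := ⟨l (s G), l (si G), si_s1 G, s_si1 G⟩
  let t1 : Equiv.Perm (B ⊗[ℂ] (B ⊗[ℂ] (B ⊗[ℂ] X))) := ⟨tau G, T G, T_tau G, tau_T G⟩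
  let t2 : Equiv.Perm (B ⊗[ℂ] (B ⊗[ℂ] (B ⊗[ℂ] X))) := ⟨l (tau G), l (T G), T_tau1 G, tau_T1 G⟩
  have h := group_part (s1 := s1) (s2 := s2) (t1 := t1) (t2 := t2)
    (Equiv.ext (H7 G)) (Equiv.ext (H4 G)) (Equiv.ext fun t => ?_) (Equiv.ext fun t => ?_)
    (Equiv.ext fun t => ?_) (Equiv.ext fun t => ?_) (Equiv.ext fun t => ?_)
  · obtain ⟨q1, q2, q3, q4, q5, q6, q7, q8⟩ := h
    exact ⟨Equiv.ext_iff.1 q1, Equiv.ext_iff.1 q2, Equiv.ext_iff.1 q3, Equiv.ext_iff.1 q4,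
      Equiv.ext_iff.1 q5, Equiv.ext_iff.1 q6, Equiv.ext_iff.1 q7, Equiv.ext_iff.1 q8⟩
  · change si G (tau G (l (tau G) (tau G t))) = l (tau G) (tau G (l (si G) (l (tau G) t)))
    rw [si_tau, L21 (si_tau G), J1]
  · change l (si G) (l (tau G) (tau G (l (tau G) t))) = tau G (l (tau G) (si G (tau G t)))
    rw [si_tau, L21 (si_tau G), J2]
  · change s G (T G (l (s G) (l (T G) t))) = l (s G) (l (T G) (s G (T G t)))
    rw [← lN_def, ← lN_def]
    exact N_lN G t
  · change T G (s G (l (s G) (l (T G) t))) = l (s G) (l (T G) (T G (s G t)))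
    rw [← lN_def, ← lN_def, T_s, T_s, R_lN]
  · change s G (T G (l (T G) (l (s G) t))) = l (T G) (l (s G) (s G (T G t)))
    rw [L21 (T_s G), L21 (T_s G)]
    exact N_lR G (g G) t


theorem final {A : Type*} [Ring A] [Algebra ℂ A] (G : BQG A) :
    op12 G.σ ∘ₗ op23 G.σ ∘ₗ op12 G.σ = op23 G.σ ∘ₗ op12 G.σ ∘ₗ op23 G.σ ∧
    op12 G.τ ∘ₗ op23 G.σ ∘ₗ op12 G.σ = op23 G.σ ∘ₗ op12 G.σ ∘ₗ op23 G.τ ∧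
    op12 G.σ ∘ₗ op23 G.τ ∘ₗ op12 G.σ = op23 G.σ ∘ₗ op12 G.τ ∘ₗ op23 G.σ ∧
    op12 G.σ ∘ₗ op23 G.σ ∘ₗ op12 G.τ = op23 G.τ ∘ₗ op12 G.σ ∘ₗ op23 G.σ ∧
    op12 G.τ ∘ₗ op23 G.τ ∘ₗ op12 G.σ = op23 G.σ ∘ₗ op12 G.τ ∘ₗ op23 G.τ ∧
    op12 G.τ ∘ₗ op23 G.σ ∘ₗ op12 G.τ = op23 G.τ ∘ₗ op12 G.σ ∘ₗ op23 G.τ ∧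
    op12 G.σ ∘ₗ op23 G.τ ∘ₗ op12 G.τ = op23 G.τ ∘ₗ op12 G.τ ∘ₗ op23 G.σ ∧
    op12 G.τ ∘ₗ op23 G.τ ∘ₗ op12 G.τ = op23 G.τ ∘ₗ op12 G.τ ∘ₗ op23 G.τ := by
  have ht : ∀ {X : Type _} [AddCommMonoid X] [Module ℂ X], tau G (X := X) = h22 G.τ :=
    fun {X} _ _ => LinearMap.ext fun t => (h22_tau G t).symm
  obtain ⟨q1, q2, q3, q4, q5, q6, q7, q8⟩ := group_gen G (X := ULift ℂ)
  simp only [ht, s] at q1 q2 q3 q4 q5 q6 q7 q8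
  refine ⟨faithful fun v => ?_, faithful fun v => ?_, faithful fun v => ?_, faithful fun v => ?_,
    faithful fun v => ?_, faithful fun v => ?_, faithful fun v => ?_, faithful fun v => ?_⟩
  all_goals simp only [LinearMap.rTensor_comp_apply, ← i3_op12, ← i3_op23]
  exacts [q1 _, q2 _, q3 _, q4 _, q5 _, q6 _, q7 _, q8 _]

end BQGP

/-- The braiding `σ` and the secondary braiding `τ` satisfy the full system of
braid equations (247)–(254). -/
theorem bqg_braid_system {A : Type*} [Ring A] [Algebra ℂ A] (G : BQG A) :
    op12 G.σ ∘ₗ op23 G.σ ∘ₗ op12 G.σ = op23 G.σ ∘ₗ op12 G.σ ∘ₗ op23 G.σ ∧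
    op12 G.τ ∘ₗ op23 G.σ ∘ₗ op12 G.σ = op23 G.σ ∘ₗ op12 G.σ ∘ₗ op23 G.τ ∧
    op12 G.σ ∘ₗ op23 G.τ ∘ₗ op12 G.σ = op23 G.σ ∘ₗ op12 G.τ ∘ₗ op23 G.σ ∧
    op12 G.σ ∘ₗ op23 G.σ ∘ₗ op12 G.τ = op23 G.τ ∘ₗ op12 G.σ ∘ₗ op23 G.σ ∧
    op12 G.τ ∘ₗ op23 G.τ ∘ₗ op12 G.σ = op23 G.σ ∘ₗ op12 G.τ ∘ₗ op23 G.τ ∧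
    op12 G.τ ∘ₗ op23 G.σ ∘ₗ op12 G.τ = op23 G.τ ∘ₗ op12 G.σ ∘ₗ op23 G.τ ∧
    op12 G.σ ∘ₗ op23 G.τ ∘ₗ op12 G.τ = op23 G.τ ∘ₗ op12 G.τ ∘ₗ op23 G.σ ∧
    op12 G.τ ∘ₗ op23 G.τ ∘ₗ op12 G.τ = op23 G.τ ∘ₗ op12 G.τ ∘ₗ op23 G.τ :=
  BQGP.final G
end
end
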